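/- arXiv:2403.08418 — 12 statements merged into one kernel-verified Lean document; each statement's English description precedes it below -/
import Mathlib

section
/- Let V₁ and V₂ be partial isometries on a complex Hilbert space H. Then the following are equivalent: (1) the product V₁V₂ is a partial isometry; (2) V₂V₂* maps the range of V₁* into the range of V₁*; (3) V₁*V₁ maps the range of V₂ into the range of V₂; (4) the operator (V₁*V₁)(V₂V₂*) is idempotent. -/
open ContinuousLinearMap

/-- A bounded operator `V` on a Hilbert space is a partial isometry if it is isometric
on the orthogonal complement of its kernel. -/
def IsPartialIsometry {H : Type*} [NormedAddCommGroup H] [InnerProductSpace ℂ H]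
    [CompleteSpace H] (V : H →L[ℂ] H) : Prop :=
  ∀ x ∈ (LinearMap.ker (V : H →ₗ[ℂ] H))ᗮ, ‖V x‖ = ‖x‖

/-!
`V` is a partial isometry iff `V V* V = V`, and then `P = V₁* V₁` and `Q = V₂ V₂*` are the
orthogonal projections onto the ranges of `V₁*` and `V₂`. Each of the four conditions says that `P`
and `Q` commute. A self-adjoint operator leaving a closed subspace invariant also leaves its
orthogonal complement invariant, so it commutes with the projection onto that subspace; this settles
the two range conditions. If `P Q` is idempotent, then `x = P Q - P Q P` satisfies `x x* = 0`, so
`P Q = P Q P` is self-adjoint. Finally, multiplying by `V₁*` and `V₂*`, respectively by `V₁` and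
`V₂`, turns the identity `(V₁ V₂) (V₁ V₂)* (V₁ V₂) = V₁ V₂` into `(P Q)² = P Q` and back.
-/

section StarSemigroup

variable {S : Type*} [Semigroup S] [StarMul S] {v w : S}

lemma isStarProjection_star_mul_self_of_mul_star_mul_self (hv : v * star v * v = v) :
    IsStarProjection (star v * v) where
  isIdempotentElem := by rw [IsIdempotentElem, mul_assoc, ← mul_assoc v, hv]
  isSelfAdjoint := .star_mul_self v

lemma star_mul_self_mul_star_of_mul_star_mul_self (hv : v * star v * v = v) :
    star v * v * star v = star v := by
  simpa only [star_mul, star_star, mul_assoc] using congrArg star hv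

lemma mul_mul_star_mul_mul_eq_iff_isIdempotentElem (hv : v * star v * v = v)
    (hw : w * star w * w = w) :
    v * w * star (v * w) * (v * w) = v * w ↔
      IsIdempotentElem (star v * v * (w * star w)) := by
  constructor <;> intro h
  · simpa only [IsIdempotentElem, star_mul, mul_assoc] using congrArg (star v * · * star w) h
  · have expand : v * (star v * v * (w * star w)) * w = v * w := by
      calc v * (star v * v * (w * star w)) * w
          = v * star v * v * (w * star w * w) := by simp only [mul_assoc]
        _ = v * w := by rw [hv, hw]
    calc v * w * star (v * w) * (v * w)
        = v * star v * v * w * star (v * w) * (v * (w * star w * w)) := by rw [hv, hw]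
      _ = v * (star v * v * (w * star w) * (star v * v * (w * star w))) * w := by
          simp only [star_mul, mul_assoc]
      _ = v * w := by rw [h.eq, expand]

end StarSemigroup

lemma isIdempotentElem_mul_iff_commute {A : Type*} [NonUnitalNormedRing A] [StarRing A]
    [CStarRing A] {p q : A} (hp : IsStarProjection p) (hq : IsStarProjection q) :
    IsIdempotentElem (p * q) ↔ Commute p q := by
  refine ⟨fun h ↦ ?_, fun h ↦ .mul_of_commute h hp.isIdempotentElem hq.isIdempotentElem⟩
  have star_eq : star (p * q - p * q * p) = q * p - p * q * p := by
    simp only [star_sub, star_mul, hp.isSelfAdjoint.star_eq, hq.isSelfAdjoint.star_eq, mul_assoc]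
  have mul_eq_zero : (p * q - p * q * p) * (q * p - p * q * p) = 0 := by
    have hpp : ∀ a, p * (p * a) = p * a := fun a ↦ by rw [← mul_assoc, hp.isIdempotentElem.eq]
    have hqq : ∀ a, q * (q * a) = q * a := fun a ↦ by rw [← mul_assoc, hq.isIdempotentElem.eq]
    have hpqpq : p * (q * (p * (q * p))) = p * (q * p) := by
      simpa only [mul_assoc] using congrArg (· * p) h.eq
    simp only [sub_mul, mul_sub, mul_assoc, hpp, hqq, hpqpq, sub_self]
  have mul_eq_conj : p * q = p * q * p := by
    rwa [← star_eq, CStarRing.mul_star_self_eq_zero_iff, sub_eq_zero] at mul_eq_zero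
  rw [hp.isSelfAdjoint.commute_iff hq.isSelfAdjoint, mul_eq_conj]
  exact hq.isSelfAdjoint.conjugate_self hp.isSelfAdjoint

lemma range_comp_eq_of_comp_comp_eq {R M N : Type*} [Semiring R] [AddCommMonoid M]
    [AddCommMonoid N] [Module R M] [Module R N] {f : M →ₗ[R] N} {g : N →ₗ[R] M}
    (h : f ∘ₗ g ∘ₗ f = f) : LinearMap.range (f ∘ₗ g) = LinearMap.range f := by
  refine le_antisymm (LinearMap.range_comp_le_range g f) ?_
  rintro _ ⟨x, rfl⟩
  exact ⟨f x, congr($h x)⟩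

section InnerProductSpace

variable {𝕜 E F G : Type*} [RCLike 𝕜]
  [NormedAddCommGroup E] [InnerProductSpace 𝕜 E] [CompleteSpace E]
  [NormedAddCommGroup F] [InnerProductSpace 𝕜 F]
  [NormedAddCommGroup G] [InnerProductSpace 𝕜 G]

lemma apply_starProjection_orthogonal_ker (T : E →L[𝕜] F) (x : E) :
    T (T.kerᗮ.starProjection x) = T x := by
  have hx : T (T.ker.starProjection x) = 0 := T.ker.starProjection_apply_mem x
  rw [Submodule.starProjection_orthogonal_val, map_sub, hx, sub_zero]

lemma adjoint_comp_self_eq_iff_norm_apply_eq [CompleteSpace F] [CompleteSpace G]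
    (S : E →L[𝕜] F) (T : E →L[𝕜] G) :
    adjoint S ∘L S = adjoint T ∘L T ↔ ∀ x, ‖S x‖ = ‖T x‖ := by
  constructor
  · intro h x
    rw [apply_norm_eq_sqrt_inner_adjoint_left, h, ← apply_norm_eq_sqrt_inner_adjoint_left]
  · intro h
    have symm : (adjoint S ∘L S - adjoint T ∘L T : E →L[𝕜] E).IsSymmetric :=
      S.isPositive_adjoint_comp_self.isSymmetric.sub T.isPositive_adjoint_comp_self.isSymmetric
    rw [← sub_eq_zero, ← coe_inj]
    refine symm.inner_map_self_eq_zero.mp fun x ↦ ?_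
    simp [inner_sub_left, adjoint_inner_left, h x]

lemma range_mem_invtSubmodule_iff_commute_of_isStarProjection {p T : E →L[𝕜] E}
    (hp : IsStarProjection p) (hT : IsSelfAdjoint T) :
    p.range ∈ Module.End.invtSubmodule (T : E →ₗ[𝕜] E) ↔ Commute p T := by
  rw [hp.isIdempotentElem.commute_iff, iff_self_and,
    ← IsStarNormal.orthogonal_range hp.isStarNormal]
  intro h
  exact orthogonal_mem_invtSubmodule (by rwa [hT.adjoint_eq])

lemma starProjection_orthogonal_ker_eq_self {p : E →L[𝕜] E} (hp : IsStarProjection p) :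
    p.kerᗮ.starProjection = p := by
  obtain ⟨K, _, rfl⟩ := isStarProjection_iff_eq_starProjection.mp hp
  simp

end InnerProductSpace

section PartialIsometry

variable {H : Type*} [NormedAddCommGroup H] [InnerProductSpace ℂ H] [CompleteSpace H]
  {V : H →L[ℂ] H}

lemma isPartialIsometry_iff_norm_apply_eq :
    IsPartialIsometry V ↔ ∀ x, ‖V x‖ = ‖V.kerᗮ.starProjection x‖ := by
  constructor
  · intro h x
    rw [← apply_starProjection_orthogonal_ker, h _ (V.kerᗮ.starProjection_apply_mem x)]
  · intro h x hx
    rw [h, Submodule.starProjection_eq_self_iff.mpr hx]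

lemma isPartialIsometry_iff_star_mul_self_eq :
    IsPartialIsometry V ↔ star V * V = V.kerᗮ.starProjection := by
  have hP : IsStarProjection V.kerᗮ.starProjection := isStarProjection_starProjection
  rw [isPartialIsometry_iff_norm_apply_eq, ← adjoint_comp_self_eq_iff_norm_apply_eq,
    hP.isSelfAdjoint.adjoint_eq, ← mul_def, ← mul_def, hP.isIdempotentElem.eq, star_eq_adjoint]

lemma isPartialIsometry_iff_mul_star_mul_self :
    IsPartialIsometry V ↔ V * star V * V = V := by
  rw [isPartialIsometry_iff_star_mul_self_eq]
  constructor <;> intro h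
  · rw [mul_assoc, h]
    exact ContinuousLinearMap.ext (apply_starProjection_orthogonal_ker V)
  · have ker_eq : (star V * V).ker = V.ker := V.ker_adjoint_comp_self
    simpa only [ker_eq] using (starProjection_orthogonal_ker_eq_self
      (isStarProjection_star_mul_self_of_mul_star_mul_self h)).symm

namespace IsPartialIsometry

lemma mul_star_mul_self (hV : IsPartialIsometry V) : V * star V * V = V :=
  isPartialIsometry_iff_mul_star_mul_self.mp hV

protected lemma star (hV : IsPartialIsometry V) : IsPartialIsometry (star V) := by
  rw [isPartialIsometry_iff_mul_star_mul_self, star_star]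
  exact star_mul_self_mul_star_of_mul_star_mul_self hV.mul_star_mul_self

lemma isStarProjection_star_mul_self (hV : IsPartialIsometry V) :
    IsStarProjection (star V * V) :=
  isStarProjection_star_mul_self_of_mul_star_mul_self hV.mul_star_mul_self

lemma isStarProjection_mul_star_self (hV : IsPartialIsometry V) :
    IsStarProjection (V * star V) := by
  simpa only [star_star] using hV.star.isStarProjection_star_mul_self

lemma range_mul_star_self (hV : IsPartialIsometry V) : (V * star V).range = V.range :=
  range_comp_eq_of_comp_comp_eq congr(($hV.mul_star_mul_self : H →ₗ[ℂ] H))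

lemma range_mem_invtSubmodule_iff_commute {T : H →L[ℂ] H} (hV : IsPartialIsometry V)
    (hT : IsSelfAdjoint T) :
    V.range ∈ Module.End.invtSubmodule (T : H →ₗ[ℂ] H) ↔ Commute (V * star V) T := by
  rw [← hV.range_mul_star_self]
  exact range_mem_invtSubmodule_iff_commute_of_isStarProjection
    hV.isStarProjection_mul_star_self hT

lemma mul_iff_isIdempotentElem {W : H →L[ℂ] H} (hV : IsPartialIsometry V)
    (hW : IsPartialIsometry W) :
    IsPartialIsometry (V * W) ↔ IsIdempotentElem (star V * V * (W * star W)) := by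
  rw [isPartialIsometry_iff_mul_star_mul_self]
  exact mul_mul_star_mul_mul_eq_iff_isIdempotentElem hV.mul_star_mul_self hW.mul_star_mul_self

end IsPartialIsometry

end PartialIsometry

theorem stmt_0 {H : Type*} [NormedAddCommGroup H] [InnerProductSpace ℂ H] [CompleteSpace H]
    (V₁ V₂ : H →L[ℂ] H) (h₁ : IsPartialIsometry V₁) (h₂ : IsPartialIsometry V₂) :
    List.TFAE
      [IsPartialIsometry (V₁ * V₂),
       ∀ x ∈ LinearMap.range (adjoint V₁ : H →ₗ[ℂ] H), (V₂ * adjoint V₂) x ∈ LinearMap.range (adjoint V₁ : H →ₗ[ℂ] H),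
       ∀ x ∈ LinearMap.range (V₂ : H →ₗ[ℂ] H), (adjoint V₁ * V₁) x ∈ LinearMap.range (V₂ : H →ₗ[ℂ] H),
       IsIdempotentElem ((adjoint V₁ * V₁) * (V₂ * adjoint V₂))] := by
  simp only [← star_eq_adjoint]
  have hP : IsStarProjection (star V₁ * V₁) := h₁.isStarProjection_star_mul_self
  have hQ : IsStarProjection (V₂ * star V₂) := h₂.isStarProjection_mul_star_self
  have idempotent_iff := isIdempotentElem_mul_iff_commute hP hQ
  tfae_have 1 ↔ 4 := h₁.mul_iff_isIdempotentElem h₂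
  tfae_have 2 ↔ 4 := by
    rw [idempotent_iff]
    simpa only [star_star, Module.End.mem_invtSubmodule_iff_forall_mem_of_mem] using!
      h₁.star.range_mem_invtSubmodule_iff_commute hQ.isSelfAdjoint
  tfae_have 3 ↔ 4 := by
    rw [idempotent_iff, Commute.symm_iff]
    exact h₂.range_mem_invtSubmodule_iff_commute hP.isSelfAdjoint
  tfae_finish
end

section
/- Let V be a partial isometry on a complex Hilbert space H. Then V^n is a partial isometry for every n ≥ 1 (i.e., V is a power partial isometry) if and only if V maps (ker V^{k+1})^⊥ into (ker V^k)^⊥ for every k ≥ 1. -/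
open ContinuousLinearMap

/-!
If `T` is a partial isometry, then `‖T x‖` is the norm of the projection of `x` to `(ker T)ᗮ`, so
`(ker T)ᗮ` is exactly the set of vectors whose norm `T` preserves. Let `S` and `T` be partial
isometries. On `(ker (S ∘ T))ᗮ ≤ (ker T)ᗮ` the map `T` preserves norms, so `S ∘ T` preserves the
norm of `x` there if and only if `S` preserves that of `T x`, i.e. `T x ∈ (ker S)ᗮ`. The case
`S = V ^ k`, `T = V`, together with induction on `k`, gives the theorem.
-/

section PartialLinearIsometry

variable {𝕜 E F G : Type*} [RCLike 𝕜] [NormedAddCommGroup E] [InnerProductSpace 𝕜 E]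

/-- The notion of partial isometry for a linear map between possibly different spaces over `ℝ` or
`ℂ`: the map preserves norms on the orthogonal complement of its kernel. Continuity is not built
in; it follows when the kernel has an orthogonal projection. -/
def IsPartialLinearIsometry [SeminormedAddCommGroup F] [Module 𝕜 F] (T : E →ₗ[𝕜] F) : Prop :=
  ∀ x ∈ (LinearMap.ker T)ᗮ, ‖T x‖ = ‖x‖

namespace IsPartialLinearIsometry

section

variable [SeminormedAddCommGroup F] [Module 𝕜 F] {T : E →ₗ[𝕜] F}
  [(LinearMap.ker T).HasOrthogonalProjection]

theorem norm_apply_eq_norm_starProjection (hT : IsPartialLinearIsometry T) (x : E) :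
    ‖T x‖ = ‖(LinearMap.ker T)ᗮ.starProjection x‖ := by
  have apply_starProjection : T ((LinearMap.ker T)ᗮ.starProjection x) = T x := by
    rw [Submodule.starProjection_orthogonal_val, map_sub,
      LinearMap.mem_ker.mp (Submodule.starProjection_apply_mem _ x), sub_zero]
  rw [← apply_starProjection, hT _ (Submodule.starProjection_apply_mem _ x)]

theorem mem_orthogonal_ker_iff (hT : IsPartialLinearIsometry T) {x : E} :
    x ∈ (LinearMap.ker T)ᗮ ↔ ‖T x‖ = ‖x‖ := by
  rw [Submodule.mem_iff_norm_starProjection, hT.norm_apply_eq_norm_starProjection]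

end

theorem comp_iff [NormedAddCommGroup F] [InnerProductSpace 𝕜 F] [SeminormedAddCommGroup G]
    [Module 𝕜 G] {S : F →ₗ[𝕜] G} {T : E →ₗ[𝕜] F} [(LinearMap.ker S).HasOrthogonalProjection]
    (hS : IsPartialLinearIsometry S) (hT : IsPartialLinearIsometry T) :
    IsPartialLinearIsometry (S ∘ₗ T) ↔
      ∀ x ∈ (LinearMap.ker (S ∘ₗ T))ᗮ, T x ∈ (LinearMap.ker S)ᗮ := by
  refine forall₂_congr fun x hx ↦ ?_
  have norm_apply : ‖T x‖ = ‖x‖ :=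
    hT x (Submodule.orthogonal_le (LinearMap.ker_le_ker_comp T S) hx)
  rw [hS.mem_orthogonal_ker_iff, norm_apply, LinearMap.comp_apply]

theorem pow_succ_iff {V : E →ₗ[𝕜] E} {k : ℕ} [(LinearMap.ker (V ^ k)).HasOrthogonalProjection]
    (hVk : IsPartialLinearIsometry (V ^ k)) (hV : IsPartialLinearIsometry V) :
    IsPartialLinearIsometry (V ^ (k + 1)) ↔
      ∀ x ∈ (LinearMap.ker (V ^ (k + 1)))ᗮ, V x ∈ (LinearMap.ker (V ^ k))ᗮ := by
  rw [pow_succ, Module.End.mul_eq_comp]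
  exact hVk.comp_iff hV

end IsPartialLinearIsometry

theorem stmt_2_general (V : E →ₗ[𝕜] E) [∀ n, (LinearMap.ker (V ^ n)).HasOrthogonalProjection]
    (hV : IsPartialLinearIsometry V) :
    (∀ n : ℕ, 1 ≤ n → IsPartialLinearIsometry (V ^ n)) ↔
      ∀ k : ℕ, 1 ≤ k →
        ∀ x ∈ (LinearMap.ker (V ^ (k + 1)))ᗮ, V x ∈ (LinearMap.ker (V ^ k))ᗮ := by
  constructor
  · intro hpow k hk
    exact ((hpow k hk).pow_succ_iff hV).mp (hpow (k + 1) (Nat.le_add_left 1 k))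
  · intro hmaps n hn
    induction n, hn using Nat.le_induction with
    | base => rwa [pow_one]
    | succ k hk ih => exact (ih.pow_succ_iff hV).mpr (hmaps k hk)

end PartialLinearIsometry

theorem stmt_2 {H : Type*} [NormedAddCommGroup H] [InnerProductSpace ℂ H] [CompleteSpace H]
    (V : H →L[ℂ] H) (hV : IsPartialIsometry V) :
    (∀ n : ℕ, 1 ≤ n → IsPartialIsometry (V ^ n)) ↔
      (∀ k : ℕ, 1 ≤ k → ∀ x ∈ (LinearMap.ker ((V ^ (k + 1) : H →L[ℂ] H) : H →ₗ[ℂ] H))ᗮ,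
        V x ∈ (LinearMap.ker ((V ^ k : H →L[ℂ] H) : H →ₗ[ℂ] H))ᗮ) := by
  have (n : ℕ) : (LinearMap.ker ((V : H →ₗ[ℂ] H) ^ n)).HasOrthogonalProjection := by
    rw [← toLinearMap_pow]
    infer_instance
  have general_iff := stmt_2_general (V : H →ₗ[ℂ] H) hV
  simp only [← toLinearMap_pow] at general_iff
  exact general_iff
end

section
/- Let V be a contraction on a complex Hilbert space H such that ker(V²) = ker V. If V^n is a partial isometry for some n ≥ 2, then V is a partial isometry. -/
/-!
Write `V ^ (m + 1) = V ^ m ∘ V`. Since `ker (V ^ 2) = ker V`, the operators `V ^ (m + 1)` and `V`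
have the same kernel. On its orthogonal complement `‖x‖ = ‖V ^ m (V x)‖ ≤ ‖V x‖ ≤ ‖x‖`, because both
factors are contractions.
-/

open ContinuousLinearMap

theorem ker_pow_eq_ker_of_ker_sq_eq_ker {K M : Type*} [DivisionRing K] [AddCommGroup M] [Module K M]
    {f : Module.End K M} (hf : LinearMap.ker (f ^ 2) = LinearMap.ker f) {n : ℕ} (hn : n ≠ 0) :
    LinearMap.ker (f ^ n) = LinearMap.ker f := by
  obtain ⟨m, rfl⟩ := Nat.exists_eq_succ_of_ne_zero hn
  have hstable : LinearMap.ker (f ^ 1) = LinearMap.ker (f ^ (1 + m)) :=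
    Module.End.ker_pow_constant (by rw [pow_one]; exact hf.symm) m
  rw [Nat.succ_eq_one_add, ← hstable, pow_one]

section Contraction

variable {𝕜 E F G : Type*} [NontriviallyNormedField 𝕜]
  [SeminormedAddCommGroup E] [NormedSpace 𝕜 E] [SeminormedAddCommGroup F] [NormedSpace 𝕜 F]
  [SeminormedAddCommGroup G] [NormedSpace 𝕜 G]

theorem opNorm_pow_le_one {V : E →L[𝕜] E} (hV : ‖V‖ ≤ 1) : ∀ m : ℕ, ‖V ^ m‖ ≤ 1
  | 0 => norm_id_le
  | m + 1 => (norm_pow_le' V m.succ_pos).trans (pow_le_one₀ (norm_nonneg V) hV)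

theorem norm_apply_eq_of_norm_comp_apply_eq {W : F →L[𝕜] G} {V : E →L[𝕜] F}
    (hW : ‖W‖ ≤ 1) (hV : ‖V‖ ≤ 1) {x : E} (hx : ‖(W ∘L V) x‖ = ‖x‖) : ‖V x‖ = ‖x‖ := by
  refine le_antisymm (by simpa using V.le_of_opNorm_le hV x) ?_
  calc ‖x‖ = ‖W (V x)‖ := hx.symm
    _ ≤ ‖V x‖ := by simpa using W.le_of_opNorm_le hW (V x)

end Contraction

theorem stmt_3_general {𝕜 E : Type*} [RCLike 𝕜] [NormedAddCommGroup E]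
    [InnerProductSpace 𝕜 E] {V : E →L[𝕜] E} (hcontr : ‖V‖ ≤ 1)
    (hker : LinearMap.ker ((V ^ 2 : E →L[𝕜] E) : E →ₗ[𝕜] E) = LinearMap.ker (V : E →ₗ[𝕜] E))
    {n : ℕ} (hn : n ≠ 0)
    (hpi : ∀ x ∈ (LinearMap.ker ((V ^ n : E →L[𝕜] E) : E →ₗ[𝕜] E))ᗮ, ‖(V ^ n) x‖ = ‖x‖) :
    ∀ x ∈ (LinearMap.ker (V : E →ₗ[𝕜] E))ᗮ, ‖V x‖ = ‖x‖ := by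
  intro x hx
  rw [toLinearMap_pow] at hker hpi
  rw [ker_pow_eq_ker_of_ker_sq_eq_ker hker hn] at hpi
  obtain ⟨m, rfl⟩ := Nat.exists_eq_succ_of_ne_zero hn
  have hcomp : ‖((V ^ m) ∘L V) x‖ = ‖x‖ := hpi x hx
  exact norm_apply_eq_of_norm_comp_apply_eq (opNorm_pow_le_one hcontr m) hcontr hcomp

theorem stmt_3 {H : Type*} [NormedAddCommGroup H] [InnerProductSpace ℂ H] [CompleteSpace H]
    (V : H →L[ℂ] H) (hcontr : ‖V‖ ≤ 1)
    (hker : LinearMap.ker ((V ^ 2 : H →L[ℂ] H) : H →ₗ[ℂ] H) = LinearMap.ker (V : H →ₗ[ℂ] H))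
    (n : ℕ) (hn : 2 ≤ n) (hpi : IsPartialIsometry (V ^ n)) :
    IsPartialIsometry V :=
  stmt_3_general hcontr hker (by lia) hpi
end

section
/- Let V be a contraction on a complex Hilbert space H and suppose V^n is a partial isometry for some n ≥ 2. Then V is a partial isometry if and only if both of the following hold: (a) ‖Vh‖ = ‖h‖ for every h ∈ ker(V^n) ∩ (ker V)^⊥; (b) the set V((ker V^n)^⊥) is orthogonal to the set V(ker(V^n) ∩ (ker V)^⊥). -/
open ContinuousLinearMap
open scoped InnerProductSpace

/-!
A contraction `V` for which `V ^ n` is a partial isometry is isometric on `(ker (V ^ n))ᗮ`, because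
there `‖x‖ = ‖(V ^ n) x‖ ≤ ‖V x‖ ≤ ‖x‖`. Now `(ker V)ᗮ` is the orthogonal sum of `(ker (V ^ n))ᗮ`
and `ker (V ^ n) ⊓ (ker V)ᗮ`, and a linear map isometric on one summand of an orthogonal sum is
isometric on the whole exactly when it is isometric on the other summand and keeps the two images
orthogonal: polarization gives one direction and Pythagoras the other.
-/

section SeminormedInnerProductSpace

variable {𝕜 E F : Type*} [RCLike 𝕜] [SeminormedAddCommGroup E] [InnerProductSpace 𝕜 E]
  [SeminormedAddCommGroup F] [InnerProductSpace 𝕜 F]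

theorem inner_map_map_of_forall_mem_norm_map {f : E →ₗ[𝕜] F} {K : Submodule 𝕜 E}
    (hf : ∀ x ∈ K, ‖f x‖ = ‖x‖) {x y : E} (hx : x ∈ K) (hy : y ∈ K) :
    ⟪f x, f y⟫_𝕜 = ⟪x, y⟫_𝕜 :=
  (LinearMap.norm_map_iff_inner_map_map (f.domRestrict K)).mp (fun z ↦ hf z z.2) ⟨x, hx⟩ ⟨y, hy⟩

theorem norm_add_eq_norm_add_of_inner_eq_zero {x y : E} {x' y' : F} (hx : ‖x'‖ = ‖x‖)
    (hy : ‖y'‖ = ‖y‖) (hxy : ⟪x, y⟫_𝕜 = 0) (hxy' : ⟪x', y'⟫_𝕜 = 0) :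
    ‖x' + y'‖ = ‖x + y‖ := by
  rw [← mul_self_inj (norm_nonneg _) (norm_nonneg _),
    norm_add_sq_eq_norm_sq_add_norm_sq_of_inner_eq_zero x y hxy,
    norm_add_sq_eq_norm_sq_add_norm_sq_of_inner_eq_zero x' y' hxy', hx, hy]

end SeminormedInnerProductSpace

theorem forall_mem_sup_norm_map_iff_of_isOrtho {𝕜 E F : Type*} [RCLike 𝕜]
    [NormedAddCommGroup E] [InnerProductSpace 𝕜 E] [SeminormedAddCommGroup F]
    [InnerProductSpace 𝕜 F] {f : E →ₗ[𝕜] F} {K L : Submodule 𝕜 E}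
    (hKL : K ⟂ L) (hK : ∀ x ∈ K, ‖f x‖ = ‖x‖) :
    (∀ x ∈ K ⊔ L, ‖f x‖ = ‖x‖) ↔
      (∀ y ∈ L, ‖f y‖ = ‖y‖) ∧ ∀ x ∈ K, ∀ y ∈ L, ⟪f x, f y⟫_𝕜 = 0 := by
  constructor
  · intro hsup
    refine ⟨fun y hy ↦ hsup y (Submodule.mem_sup_right hy), fun x hx y hy ↦ ?_⟩
    rw [inner_map_map_of_forall_mem_norm_map hsup (Submodule.mem_sup_left hx)
      (Submodule.mem_sup_right hy), hKL.inner_eq hx hy]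
  · rintro ⟨hL, hortho⟩ z hz
    obtain ⟨x, hx, y, hy, rfl⟩ := Submodule.mem_sup.mp hz
    rw [map_add]
    exact norm_add_eq_norm_add_of_inner_eq_zero (hK x hx) (hL y hy) (hKL.inner_eq hx hy)
      (hortho x hx y hy)

theorem orthogonal_sup_inf_orthogonal {𝕜 E : Type*} [RCLike 𝕜] [NormedAddCommGroup E]
    [InnerProductSpace 𝕜 E] {K L : Submodule 𝕜 E} [L.HasOrthogonalProjection] (hKL : K ≤ L) :
    Lᗮ ⊔ L ⊓ Kᗮ = Kᗮ := by
  simpa only [Submodule.orthogonal_orthogonal] using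
    Submodule.sup_orthogonal_inf_of_hasOrthogonalProjection (Submodule.orthogonal_le hKL)

theorem antitone_norm_pow_apply {𝕜 E : Type*} [NontriviallyNormedField 𝕜]
    [SeminormedAddCommGroup E] [NormedSpace 𝕜 E] {f : E →L[𝕜] E} (hf : ‖f‖ ≤ 1) (x : E) :
    Antitone fun n : ℕ ↦ ‖(f ^ n) x‖ :=
  antitone_nat_of_succ_le fun n ↦ by
    simpa only [pow_succ', mul_apply_eq_comp, one_mul] using
      f.le_of_opNorm_le hf ((f ^ n) x)

theorem ker_le_ker_of_norm_apply_le {R E F G : Type*} [Ring R] [AddCommGroup E] [Module R E]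
    [SeminormedAddCommGroup F] [Module R F] [NormedAddCommGroup G] [Module R G]
    {V : E →ₗ[R] F} {W : E →ₗ[R] G} (hWV : ∀ x, ‖W x‖ ≤ ‖V x‖) :
    LinearMap.ker V ≤ LinearMap.ker W := fun x (hx : V x = 0) ↦
  norm_le_zero_iff.mp <| (hWV x).trans_eq <| by rw [hx, norm_zero]

-- `W` stands for `V ^ n`: domination by `V` is all that is needed of its being a power.
theorem stmt_4_general {𝕜 E F G : Type*} [RCLike 𝕜] [NormedAddCommGroup E]
    [InnerProductSpace 𝕜 E] [SeminormedAddCommGroup F] [InnerProductSpace 𝕜 F]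
    [NormedAddCommGroup G] [Module 𝕜 G] (V : E →ₗ[𝕜] F) (W : E →ₗ[𝕜] G)
    [(LinearMap.ker W).HasOrthogonalProjection] (hV : ∀ x, ‖V x‖ ≤ ‖x‖)
    (hWV : ∀ x, ‖W x‖ ≤ ‖V x‖) (hW : ∀ x ∈ (LinearMap.ker W)ᗮ, ‖W x‖ = ‖x‖) :
    (∀ x ∈ (LinearMap.ker V)ᗮ, ‖V x‖ = ‖x‖) ↔
      (∀ h ∈ LinearMap.ker W ⊓ (LinearMap.ker V)ᗮ, ‖V h‖ = ‖h‖) ∧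
        ∀ x ∈ (LinearMap.ker W)ᗮ, ∀ y ∈ LinearMap.ker W ⊓ (LinearMap.ker V)ᗮ,
          ⟪V x, V y⟫_𝕜 = 0 := by
  have hV_isometric : ∀ x ∈ (LinearMap.ker W)ᗮ, ‖V x‖ = ‖x‖ := fun x hx ↦
    (hV x).antisymm <| (hW x hx).symm.trans_le (hWV x)
  have hortho : (LinearMap.ker W)ᗮ ⟂ LinearMap.ker W ⊓ (LinearMap.ker V)ᗮ :=
    (LinearMap.ker W).isOrtho_orthogonal_left.mono_right inf_le_left
  have hsup := orthogonal_sup_inf_orthogonal (ker_le_ker_of_norm_apply_le hWV)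
  simpa only [hsup] using forall_mem_sup_norm_map_iff_of_isOrtho hortho hV_isometric

theorem stmt_4 {H : Type*} [NormedAddCommGroup H] [InnerProductSpace ℂ H] [CompleteSpace H]
    (V : H →L[ℂ] H) (hcontr : ‖V‖ ≤ 1)
    (n : ℕ) (hn : 2 ≤ n) (hpi : IsPartialIsometry (V ^ n)) :
    IsPartialIsometry V ↔
      ((∀ h ∈ LinearMap.ker ((V ^ n : H →L[ℂ] H) : H →ₗ[ℂ] H) ⊓ (LinearMap.ker (V : H →ₗ[ℂ] H))ᗮ, ‖V h‖ = ‖h‖) ∧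
       (∀ x ∈ (LinearMap.ker ((V ^ n : H →L[ℂ] H) : H →ₗ[ℂ] H))ᗮ, ∀ y ∈ LinearMap.ker ((V ^ n : H →L[ℂ] H) : H →ₗ[ℂ] H) ⊓ (LinearMap.ker (V : H →ₗ[ℂ] H))ᗮ,
         ⟪V x, V y⟫_ℂ = 0)) := by
  have hV (x : H) : ‖V x‖ ≤ ‖x‖ := by
    simpa only [one_mul] using V.le_of_opNorm_le hcontr x
  have hpow (x : H) : ‖(V ^ n) x‖ ≤ ‖V x‖ := by
    simpa only [pow_one] using antitone_norm_pow_apply hcontr x (one_le_two.trans hn)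
  exact stmt_4_general (V : H →ₗ[ℂ] H) ((V ^ n : H →L[ℂ] H) : H →ₗ[ℂ] H) hV hpow hpi
end

section
/- Let V₁ and V₂ be partial isometries on a complex Hilbert space H satisfying V₁(V₂V₂*) = (V₂V₂*)V₁. Then the product V₁V₂ is a partial isometry. -/
open ContinuousLinearMap

/-!
An operator `V` is a partial isometry iff `V† V` is the orthogonal projection onto `(ker V)ᗮ`,
iff `V V† V = V`. If the projections `V₁† V₁` and `V₂ V₂†` commute, then
`(V₁ V₂) (V₁ V₂)† (V₁ V₂) = V₁ (V₂ V₂†) (V₁† V₁) V₂ = (V₁ V₁† V₁) (V₂ V₂† V₂) = V₁ V₂`.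
-/

section PartialIsometry

open scoped InnerProduct

variable {𝕜 E F G : Type*} [RCLike 𝕜]
  [NormedAddCommGroup E] [InnerProductSpace 𝕜 E]
  [NormedAddCommGroup F] [InnerProductSpace 𝕜 F]
  [NormedAddCommGroup G] [InnerProductSpace 𝕜 G]

/-- Partial isometries between two inner product spaces over `ℝ` or `ℂ`, extending
`IsPartialIsometry` to maps whose domain and codomain differ. -/
def IsIsometricOnKerOrthogonal (V : E →L[𝕜] F) : Prop :=
  ∀ x ∈ V.kerᗮ, ‖V x‖ = ‖x‖

variable [CompleteSpace E]

theorem apply_starProjection_ker_orthogonal (V : E →L[𝕜] F) (x : E) :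
    V (V.kerᗮ.starProjection x) = V x := by
  have : CompleteSpace V.ker := V.isClosed_ker.completeSpace_coe
  have hmem : x - V.kerᗮ.starProjection x ∈ V.ker := by
    simpa only [Submodule.orthogonal_orthogonal] using
      V.kerᗮ.sub_starProjection_mem_orthogonal x
  exact (LinearMap.sub_mem_ker_iff.mp hmem).symm

theorem isIsometricOnKerOrthogonal_iff_norm_eq {V : E →L[𝕜] F} :
    IsIsometricOnKerOrthogonal V ↔ ∀ x, ‖V x‖ = ‖V.kerᗮ.starProjection x‖ := by
  refine ⟨fun hV x ↦ ?_, fun hV x hx ↦ ?_⟩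
  · rw [← apply_starProjection_ker_orthogonal V x]
    exact hV _ (Submodule.starProjection_apply_mem _ x)
  · rw [hV x, Submodule.starProjection_eq_self_iff.mpr hx]

variable [CompleteSpace F] [CompleteSpace G]

theorem adjoint_comp_self_eq_adjoint_comp_self_iff {A : E →L[𝕜] F} {B : E →L[𝕜] G} :
    A† ∘L A = B† ∘L B ↔ ∀ x, ‖A x‖ = ‖B x‖ := by
  refine ⟨fun h x ↦ ?_, fun h ↦ ?_⟩
  · rw [A.apply_norm_eq_sqrt_inner_adjoint_left, B.apply_norm_eq_sqrt_inner_adjoint_left, h]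
  · have hsymm : (A† ∘L A - B† ∘L B).IsSymmetric :=
      A.isPositive_adjoint_comp_self.isSymmetric.sub B.isPositive_adjoint_comp_self.isSymmetric
    refine sub_eq_zero.mp (coe_injective (hsymm.inner_map_self_eq_zero.mp fun x ↦ ?_))
    simp [inner_sub_left, adjoint_inner_left, h x]

theorem isIsometricOnKerOrthogonal_iff_adjoint_comp_self {V : E →L[𝕜] F} :
    IsIsometricOnKerOrthogonal V ↔ V† ∘L V = V.kerᗮ.starProjection := by
  have hP : IsStarProjection V.kerᗮ.starProjection := isStarProjection_starProjection
  have hPP : (V.kerᗮ.starProjection)† ∘L V.kerᗮ.starProjection = V.kerᗮ.starProjection := by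
    rw [hP.isSelfAdjoint.adjoint_eq]
    exact hP.isIdempotentElem
  rw [isIsometricOnKerOrthogonal_iff_norm_eq, ← adjoint_comp_self_eq_adjoint_comp_self_iff, hPP]

theorem adjoint_apply_mem_ker_orthogonal (V : E →L[𝕜] F) (y : F) : (V†) y ∈ V.kerᗮ := by
  rw [orthogonal_ker]
  exact Submodule.le_topologicalClosure _ (LinearMap.mem_range_self _ y)

theorem isIsometricOnKerOrthogonal_iff_comp_adjoint_comp_self {V : E →L[𝕜] F} :
    IsIsometricOnKerOrthogonal V ↔ V ∘L V† ∘L V = V := by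
  rw [isIsometricOnKerOrthogonal_iff_adjoint_comp_self]
  refine ⟨fun h ↦ ?_, fun h ↦ ?_⟩
  · rw [h]
    exact ContinuousLinearMap.ext (apply_starProjection_ker_orthogonal V)
  · ext x
    have hker : x - (V†) (V x) ∈ V.ker :=
      LinearMap.sub_mem_ker_iff.mpr (DFunLike.congr_fun h x).symm
    exact (Submodule.eq_starProjection_of_mem_orthogonal (adjoint_apply_mem_ker_orthogonal V _)
      (Submodule.le_orthogonal_orthogonal _ hker)).symm

theorem stmt_5_general {V₁ : F →L[𝕜] G} {V₂ : E →L[𝕜] F}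
    (h₁ : IsIsometricOnKerOrthogonal V₁) (h₂ : IsIsometricOnKerOrthogonal V₂)
    (hcomm : Commute (V₁† ∘L V₁) (V₂ ∘L V₂†)) :
    IsIsometricOnKerOrthogonal (V₁ ∘L V₂) := by
  rw [isIsometricOnKerOrthogonal_iff_comp_adjoint_comp_self] at h₁ h₂ ⊢
  calc (V₁ ∘L V₂) ∘L (V₁ ∘L V₂)† ∘L V₁ ∘L V₂
    _ = V₁ ∘L ((V₂ ∘L V₂†) ∘L (V₁† ∘L V₁)) ∘L V₂ := by simp only [adjoint_comp, comp_assoc]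
    _ = V₁ ∘L ((V₁† ∘L V₁) ∘L (V₂ ∘L V₂†)) ∘L V₂ :=
      congrArg (V₁ ∘L · ∘L V₂) hcomm.eq.symm
    _ = (V₁ ∘L V₁† ∘L V₁) ∘L (V₂ ∘L V₂† ∘L V₂) := by simp only [comp_assoc]
    _ = V₁ ∘L V₂ := by rw [h₁, h₂]

end PartialIsometry

theorem stmt_5 {H : Type*} [NormedAddCommGroup H] [InnerProductSpace ℂ H] [CompleteSpace H]
    (V₁ V₂ : H →L[ℂ] H) (h₁ : IsPartialIsometry V₁) (h₂ : IsPartialIsometry V₂)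
    (hcomm : V₁ * (V₂ * adjoint V₂) = (V₂ * adjoint V₂) * V₁) :
    IsPartialIsometry (V₁ * V₂) := by
  have hself : IsSelfAdjoint (V₂ * adjoint V₂) := .mul_star_self V₂
  have hstar : Commute (star V₁) (V₂ * adjoint V₂) := by
    simpa only [hself.star_eq] using Commute.star_star hcomm
  exact stmt_5_general h₁ h₂ (hstar.mul_left hcomm)
end

section
/- Let n ≥ 2 and let V₁, …, Vₙ be partial isometries on a complex Hilbert space H. For i ∈ {1,…,n} set Tᵢ = V₁V₂⋯Vᵢ. Then the following are equivalent: (1) Tᵢ is a partial isometry for every i ∈ {2,…,n}; (2) for every i ∈ {2,…,n}, VᵢVᵢ* maps the range of T_{i-1}* into the range of T_{i-1}*; (3) for every i ∈ {1,…,n-1}, Tᵢ*Tᵢ maps the range of V_{i+1} into the range of V_{i+1}. -/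
open ContinuousLinearMap

/-!
For partial isometries `T` and `V`, the product `T V` is a partial isometry exactly when the product
of the projections `T* T` and `V V*` is idempotent, that is, when these projections commute. The
range of `T* T` is the range of `T*` and the range of `V V*` is that of `V`; a self-adjoint operator
that leaves the range of a projection invariant also leaves the orthogonal complement invariant and
hence commutes with that projection. This is the case of two factors. In general, it applies to
`V₁ ⋯ Vᵢ` and `Vᵢ₊₁` only once `V₁ ⋯ Vᵢ` is known to be a partial isometry;
hence the induction on `i`.
-/

/-- A partial isometry in a ring (or semigroup) with involution: an element `v` such that
`v v* v = v`. For bounded operators on a Hilbert space this is the geometric notion, see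
`isStarPartialIsometry_iff_norm_map_eq`. -/
def IsStarPartialIsometry {R : Type*} [Mul R] [Star R] (v : R) : Prop :=
  v * star v * v = v

namespace IsStarPartialIsometry

section Semigroup

variable {R : Type*} [Semigroup R] [StarMul R] {u v : R}

protected theorem star (hv : IsStarPartialIsometry v) : IsStarPartialIsometry (star v) := by
  simpa only [IsStarPartialIsometry, star_mul, mul_assoc] using congrArg star hv

theorem isStarProjection_mul_star (hv : IsStarPartialIsometry v) :
    IsStarProjection (v * star v) where
  isIdempotentElem := by rw [IsIdempotentElem, ← mul_assoc, hv]
  isSelfAdjoint := .mul_star_self v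

theorem isStarProjection_star_mul (hv : IsStarPartialIsometry v) :
    IsStarProjection (star v * v) := by
  simpa only [star_star] using hv.star.isStarProjection_mul_star

theorem mul_iff_isIdempotentElem (hu : IsStarPartialIsometry u) (hv : IsStarPartialIsometry v) :
    IsStarPartialIsometry (u * v) ↔ IsIdempotentElem (star u * u * (v * star v)) := by
  constructor
  · intro h
    calc star u * u * (v * star v) * (star u * u * (v * star v))
        = star u * (u * v * star (u * v) * (u * v)) * star v := by
          simp only [star_mul, mul_assoc]
      _ = star u * u * (v * star v) := by rw [h]; simp only [mul_assoc]
  · intro h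
    calc u * v * star (u * v) * (u * v)
        = u * star u * u * v * star (u * v) * (u * (v * star v * v)) := by rw [hu, hv]
      _ = u * (star u * u * (v * star v) * (star u * u * (v * star v))) * v := by
          simp only [star_mul, mul_assoc]
      _ = u * star u * u * (v * star v * v) := by rw [h.eq]; simp only [mul_assoc]
      _ = u * v := by rw [hu, hv]

end Semigroup

end IsStarPartialIsometry

theorem commute_iff_isIdempotentElem_mul_of_isStarProjection {R : Type*} [NonUnitalNormedRing R]
    [StarRing R] [CStarRing R] {p q : R} (hp : IsStarProjection p) (hq : IsStarProjection q) :
    Commute p q ↔ IsIdempotentElem (p * q) := by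
  refine ⟨fun h ↦ .mul_of_commute h hp.isIdempotentElem hq.isIdempotentElem, fun h ↦ ?_⟩
  have hp_star : star p = p := hp.isSelfAdjoint
  have hq_star : star q = q := hq.isSelfAdjoint
  have star_mul_self_eq_zero : star (p * q - q * p * q) * (p * q - q * p * q) = 0 := by
    calc star (p * q - q * p * q) * (p * q - q * p * q)
        = q * (p * p) * q - q * (p * q * (p * q)) - q * (p * q * (p * q))
            + q * p * (q * q) * p * q := by
          simp only [star_sub, star_mul, hp_star, hq_star]; noncomm_ring
      _ = q * p * q - q * (p * q * (p * q)) := by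
          rw [hp.isIdempotentElem.eq, hq.isIdempotentElem.eq]; noncomm_ring
      _ = 0 := by rw [h.eq, ← mul_assoc, sub_self]
  have mul_eq : p * q = q * p * q :=
    sub_eq_zero.1 ((CStarRing.star_mul_self_eq_zero_iff _).1 star_mul_self_eq_zero)
  have isSelfAdjoint_mul : IsSelfAdjoint (p * q) := by
    rw [mul_eq]
    simpa only [hq_star] using hp.isSelfAdjoint.conjugate q
  exact (hp.isSelfAdjoint.commute_iff hq.isSelfAdjoint).2 isSelfAdjoint_mul

theorem IsStarPartialIsometry.mul_iff_commute {R : Type*} [NonUnitalNormedRing R] [StarRing R]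
    [CStarRing R] {u v : R} (hu : IsStarPartialIsometry u) (hv : IsStarPartialIsometry v) :
    IsStarPartialIsometry (u * v) ↔ Commute (star u * u) (v * star v) := by
  rw [hu.mul_iff_isIdempotentElem hv, commute_iff_isIdempotentElem_mul_of_isStarProjection
    hu.isStarProjection_star_mul hv.isStarProjection_mul_star]

section Hilbert

open Module.End

variable {𝕜 E F : Type*} [RCLike 𝕜] [NormedAddCommGroup E] [InnerProductSpace 𝕜 E] [CompleteSpace E]
  [NormedAddCommGroup F] [InnerProductSpace 𝕜 F] [CompleteSpace F]

theorem adjoint_apply_mem_orthogonal_ker (V : E →L[𝕜] F) (y : F) : adjoint V y ∈ V.kerᗮ := by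
  rw [V.orthogonal_ker]
  exact Submodule.le_topologicalClosure _ ⟨y, rfl⟩

theorem forall_mem_orthogonal_ker_norm_map_eq_iff_adjoint_apply_map (V : E →L[𝕜] F) :
    (∀ x ∈ V.kerᗮ, ‖V x‖ = ‖x‖) ↔ ∀ x ∈ V.kerᗮ, adjoint V (V x) = x := by
  let restriction : V.kerᗮ →L[𝕜] F := V ∘L V.kerᗮ.subtypeL
  have adjoint_comp_self_apply (x : V.kerᗮ) :
      ((adjoint restriction ∘L restriction) x : E) = adjoint V (V x) := by
    simp only [restriction, adjoint_comp, Submodule.adjoint_subtypeL, comp_apply,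
      Submodule.subtypeL_apply]
    exact Submodule.starProjection_eq_self_iff.2 (adjoint_apply_mem_orthogonal_ker V _)
  calc (∀ x ∈ V.kerᗮ, ‖V x‖ = ‖x‖)
      ↔ ∀ x : V.kerᗮ, ‖restriction x‖ = ‖x‖ := ⟨fun h x ↦ h x x.2, fun h x hx ↦ h ⟨x, hx⟩⟩
    _ ↔ adjoint restriction ∘L restriction = 1 := restriction.norm_map_iff_adjoint_comp_self
    _ ↔ ∀ x ∈ V.kerᗮ, adjoint V (V x) = x := by
      simp only [ContinuousLinearMap.ext_iff, Subtype.ext_iff, adjoint_comp_self_apply,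
        one_apply_eq_self, Subtype.forall]

theorem isStarPartialIsometry_iff_norm_map_eq {V : E →L[𝕜] E} :
    IsStarPartialIsometry V ↔ ∀ x ∈ V.kerᗮ, ‖V x‖ = ‖x‖ := by
  rw [forall_mem_orthogonal_ker_norm_map_eq_iff_adjoint_apply_map]
  constructor
  · intro hV x hx
    have sub_mem_ker : adjoint V (V x) - x ∈ V.ker := by
      rw [LinearMap.mem_ker, map_sub, sub_eq_zero]
      exact DFunLike.congr_fun hV x
    have sub_mem_orthogonal : adjoint V (V x) - x ∈ V.kerᗮ :=
      sub_mem (adjoint_apply_mem_orthogonal_ker V _) hx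
    exact sub_eq_zero.1 (V.ker.orthogonal_disjoint.le_bot ⟨sub_mem_ker, sub_mem_orthogonal⟩)
  · intro hV
    ext y
    have : CompleteSpace V.ker := V.isClosed_ker.completeSpace_coe
    obtain ⟨k, hk, x, hx, rfl⟩ := V.ker.exists_add_mem_mem_orthogonal y
    have hVk : V k = 0 := hk
    change V (adjoint V (V (k + x))) = V (k + x)
    rw [map_add, hVk, zero_add, hV x hx]

theorem isPartialIsometry_iff_isStarPartialIsometry {H : Type*} [NormedAddCommGroup H]
    [InnerProductSpace ℂ H] [CompleteSpace H] {V : H →L[ℂ] H} :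
    IsPartialIsometry V ↔ IsStarPartialIsometry V :=
  isStarPartialIsometry_iff_norm_map_eq.symm

theorem IsStarPartialIsometry.range_mul_star {V : E →L[𝕜] E} (hV : IsStarPartialIsometry V) :
    (V * star V).range = V.range := by
  apply le_antisymm
  · rintro _ ⟨x, rfl⟩
    exact ⟨star V x, rfl⟩
  · rintro _ ⟨x, rfl⟩
    exact ⟨V x, DFunLike.congr_fun hV x⟩

theorem commute_iff_range_mem_invtSubmodule {P Q : E →L[𝕜] E} (hP : IsStarProjection P)
    (hQ : IsSelfAdjoint Q) : Commute P Q ↔ P.range ∈ invtSubmodule Q.toLinearMap := by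
  rw [IsIdempotentElem.commute_iff hP.isIdempotentElem, and_iff_left_iff_imp]
  intro range_mem
  rw [← IsStarNormal.orthogonal_range hP.isStarNormal]
  exact orthogonal_mem_invtSubmodule (by rwa [hQ.adjoint_eq])

theorem IsStarPartialIsometry.range_mem_invtSubmodule_iff_commute {V Q : E →L[𝕜] E}
    (hV : IsStarPartialIsometry V) (hQ : IsSelfAdjoint Q) :
    V.range ∈ invtSubmodule Q.toLinearMap ↔ Commute (V * star V) Q := by
  rw [commute_iff_range_mem_invtSubmodule hV.isStarProjection_mul_star hQ, hV.range_mul_star]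

theorem IsStarPartialIsometry.mul_iff_range_adjoint_mem_invtSubmodule {T V : E →L[𝕜] E}
    (hT : IsStarPartialIsometry T) (hV : IsStarPartialIsometry V) :
    IsStarPartialIsometry (T * V) ↔
      (adjoint T).range ∈ invtSubmodule (V * adjoint V).toLinearMap := by
  rw [hT.mul_iff_commute hV, ← star_eq_adjoint, ← star_eq_adjoint,
    hT.star.range_mem_invtSubmodule_iff_commute (.mul_star_self V), star_star]

theorem IsStarPartialIsometry.mul_iff_range_mem_invtSubmodule {T V : E →L[𝕜] E}
    (hT : IsStarPartialIsometry T) (hV : IsStarPartialIsometry V) :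
    IsStarPartialIsometry (T * V) ↔ V.range ∈ invtSubmodule (adjoint T * T).toLinearMap := by
  rw [hT.mul_iff_commute hV, ← star_eq_adjoint,
    hV.range_mem_invtSubmodule_iff_commute (.star_mul_self T), Commute.symm_iff]

end Hilbert

theorem forall_mem_Icc_add_one_iff {A : ℕ → Prop} {m n : ℕ} :
    (∀ i ∈ Finset.Icc (m + 1) n, A i) ↔ ∀ i ∈ Finset.Ico m n, A (i + 1) := by
  rw [Finset.Icc_add_one_left_eq_Ioc, ← Finset.Ico_add_one_add_one_eq_Ioc,
    ← Finset.image_add_right_Ico, Finset.forall_mem_image]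

theorem forall_mem_Ico_add_one_iff_of_step {A C : ℕ → Prop} {m n : ℕ} (base : A m)
    (step : ∀ i ∈ Finset.Ico m n, A i → (A (i + 1) ↔ C i)) :
    (∀ i ∈ Finset.Ico m n, A (i + 1)) ↔ ∀ i ∈ Finset.Ico m n, C i := by
  simp only [Finset.mem_Ico, and_imp] at step ⊢
  constructor
  · intro hA i hmi hin
    refine (step i hmi hin ?_).1 (hA i hmi hin)
    cases hmi with
    | refl => exact base
    | step hmj => exact hA _ hmj (by lia)
  · intro hC i hmi
    induction i, hmi using Nat.le_induction with
    | base => exact fun hmn ↦ (step m le_rfl hmn base).2 (hC m le_rfl hmn)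
    | succ i hmi ih =>
      exact fun hin ↦ (step _ (by lia) hin (ih (by lia))).2 (hC _ (by lia) hin)

theorem stmt_7_general {𝕜 H : Type*} [RCLike 𝕜] [NormedAddCommGroup H] [InnerProductSpace 𝕜 H]
    [CompleteSpace H] (n : ℕ) (V : ℕ → H →L[𝕜] H)
    (hV : ∀ i ∈ Finset.Icc 1 n, IsStarPartialIsometry (V i))
    (T : ℕ → H →L[𝕜] H)
    (hT : ∀ i, T i = (((List.range i).map (fun j => V (j + 1)))).prod) :
    List.TFAE
      [∀ i ∈ Finset.Icc 2 n, IsStarPartialIsometry (T i),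
       ∀ i ∈ Finset.Icc 2 n, ∀ x ∈ LinearMap.range (adjoint (T (i - 1)) : H →ₗ[𝕜] H),
         (V i * adjoint (V i)) x ∈ LinearMap.range (adjoint (T (i - 1)) : H →ₗ[𝕜] H),
       ∀ i ∈ Finset.Icc 1 (n - 1), ∀ x ∈ LinearMap.range (V (i + 1) : H →ₗ[𝕜] H),
         (adjoint (T i) * T i) x ∈ LinearMap.range (V (i + 1) : H →ₗ[𝕜] H)] := by
  obtain rfl | hn := n.eq_zero_or_pos
  · simp
  have T_one : IsStarPartialIsometry (T 1) := by
    simpa [hT] using hV 1 (Finset.left_mem_Icc.2 hn)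
  have T_add_one (i : ℕ) : T (i + 1) = T i * V (i + 1) := by
    rw [hT, hT, List.prod_range_succ]
  have V_add_one (i : ℕ) (hi : i ∈ Finset.Ico 1 n) : IsStarPartialIsometry (V (i + 1)) :=
    hV _ (by grind)
  have not_isMin : ¬IsMin n := by simpa using hn.ne'
  rw [Finset.Icc_sub_one_right_eq_Ico_of_not_isMin not_isMin, forall_mem_Icc_add_one_iff,
    forall_mem_Icc_add_one_iff]
  tfae_have 1 ↔ 2 :=
    forall_mem_Ico_add_one_iff_of_step (A := fun i ↦ IsStarPartialIsometry (T i)) T_one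
      fun i hi hTi ↦ by
        rw [T_add_one]
        exact hTi.mul_iff_range_adjoint_mem_invtSubmodule (V_add_one i hi)
  tfae_have 1 ↔ 3 :=
    forall_mem_Ico_add_one_iff_of_step (A := fun i ↦ IsStarPartialIsometry (T i)) T_one
      fun i hi hTi ↦ by
        rw [T_add_one]
        exact hTi.mul_iff_range_mem_invtSubmodule (V_add_one i hi)
  tfae_finish

theorem stmt_7 {H : Type*} [NormedAddCommGroup H] [InnerProductSpace ℂ H] [CompleteSpace H]
    (n : ℕ) (hn : 2 ≤ n) (V : ℕ → H →L[ℂ] H)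
    (hV : ∀ i ∈ Finset.Icc 1 n, IsPartialIsometry (V i))
    (T : ℕ → H →L[ℂ] H)
    (hT : ∀ i, T i = (((List.range i).map (fun j => V (j + 1)))).prod) :
    List.TFAE
      [∀ i ∈ Finset.Icc 2 n, IsPartialIsometry (T i),
       ∀ i ∈ Finset.Icc 2 n, ∀ x ∈ LinearMap.range (adjoint (T (i - 1)) : H →ₗ[ℂ] H),
         (V i * adjoint (V i)) x ∈ LinearMap.range (adjoint (T (i - 1)) : H →ₗ[ℂ] H),
       ∀ i ∈ Finset.Icc 1 (n - 1), ∀ x ∈ LinearMap.range (V (i + 1) : H →ₗ[ℂ] H),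
         (adjoint (T i) * T i) x ∈ LinearMap.range (V (i + 1) : H →ₗ[ℂ] H)] := by
  simp only [isPartialIsometry_iff_isStarPartialIsometry] at hV ⊢
  exact stmt_7_general n V hV T hT
end

section
/- Let V be a contraction on a complex Hilbert space H. Then the operator on H ⊕ H given by the block matrix [[V, (I − VV*)^{1/2}], [0, 0]], i.e., (x, y) ↦ (Vx + (I − VV*)^{1/2} y, 0), is a partial isometry. -/
open ContinuousLinearMap

/-!
Since `V` is a contraction, `1 - V V⋆` is positive; let `D` be its square root. The row `R = [V D]`
satisfies `R R⋆ = V V⋆ + D D⋆ = 1`, so `R⋆` is an isometry onto `(ker R)ᗮ` with inverse `R`. The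
block matrix is `R` followed by the isometric embedding `w ↦ (w, 0)`, hence it has the same kernel
as `R` and is isometric on its orthogonal complement.
-/

section Coisometry

variable {𝕜 E F : Type*} [RCLike 𝕜]
  [NormedAddCommGroup E] [InnerProductSpace 𝕜 E] [CompleteSpace E]
  [NormedAddCommGroup F] [InnerProductSpace 𝕜 F] [CompleteSpace F]
  {T : E →L[𝕜] F} {x : E}

theorem adjoint_apply_apply_of_comp_adjoint_eq_id
    (hT : T ∘L adjoint T = ContinuousLinearMap.id 𝕜 F) (hx : x ∈ T.kerᗮ) :
    adjoint T (T x) = x := by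
  have hker : adjoint T (T x) - x ∈ T.ker := by
    simpa [sub_eq_zero] using DFunLike.congr_fun hT (T x)
  have hrange : adjoint T (T x) ∈ T.kerᗮ := by
    rw [T.orthogonal_ker]
    exact Submodule.le_topologicalClosure _ ⟨T x, rfl⟩
  exact sub_eq_zero.mp <| Submodule.disjoint_def.mp T.ker.orthogonal_disjoint _ hker
    (T.kerᗮ.sub_mem hrange hx)

theorem norm_apply_of_comp_adjoint_eq_id
    (hT : T ∘L adjoint T = ContinuousLinearMap.id 𝕜 F) (hx : x ∈ T.kerᗮ) :
    ‖T x‖ = ‖x‖ := by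
  rw [apply_norm_eq_sqrt_inner_adjoint_left, comp_apply,
    adjoint_apply_apply_of_comp_adjoint_eq_id hT hx, ← norm_eq_sqrt_re_inner]

end Coisometry

theorem IsPartialIsometry.of_norm_apply_eq {H K : Type*}
    [NormedAddCommGroup H] [InnerProductSpace ℂ H] [CompleteSpace H]
    [NormedAddCommGroup K] [InnerProductSpace ℂ K] [CompleteSpace K]
    {S : H →L[ℂ] H} {T : H →L[ℂ] K} (hT : T ∘L adjoint T = ContinuousLinearMap.id ℂ K)
    (hST : ∀ x, ‖S x‖ = ‖T x‖) : IsPartialIsometry S := by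
  have hker : S.ker = T.ker := by
    ext x
    simp only [LinearMap.mem_ker, coe_coe, ← norm_eq_zero (a := S x), hST, norm_eq_zero]
  intro x hx
  rw [hker] at hx
  rw [hST, norm_apply_of_comp_adjoint_eq_id hT hx]

section RowOperator

variable {𝕜 E F G : Type*} [RCLike 𝕜]
  [NormedAddCommGroup E] [InnerProductSpace 𝕜 E]
  [NormedAddCommGroup F] [InnerProductSpace 𝕜 F]
  [NormedAddCommGroup G] [InnerProductSpace 𝕜 G]

/-- The row operator `[A B]`, that is `(x, y) ↦ A x + B y`, on the Hilbert sum of `E` and `F`.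
It is `A.coprod B` with the domain carrying the `L²` norm, so that it has an adjoint. -/
noncomputable def rowOperator (A : E →L[𝕜] G) (B : F →L[𝕜] G) : WithLp 2 (E × F) →L[𝕜] G :=
  A.coprod B ∘L (WithLp.prodContinuousLinearEquiv 2 𝕜 E F : WithLp 2 (E × F) →L[𝕜] E × F)

@[simp]
theorem rowOperator_apply (A : E →L[𝕜] G) (B : F →L[𝕜] G) (z : WithLp 2 (E × F)) :
    rowOperator A B z = A z.fst + B z.snd :=
  rfl

variable [CompleteSpace E] [CompleteSpace F] [CompleteSpace G]

theorem adjoint_rowOperator_apply (A : E →L[𝕜] G) (B : F →L[𝕜] G) (w : G) :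
    adjoint (rowOperator A B) w = WithLp.toLp 2 (adjoint A w, adjoint B w) := by
  refine ext_inner_right 𝕜 fun z => ?_
  simp [adjoint_inner_left, inner_add_right]

theorem rowOperator_comp_adjoint (A : E →L[𝕜] G) (B : F →L[𝕜] G) :
    rowOperator A B ∘L adjoint (rowOperator A B) = A ∘L adjoint A + B ∘L adjoint B := by
  ext w
  simp [adjoint_rowOperator_apply]

end RowOperator

section Defect

variable {A : Type*} [CStarAlgebra A] [PartialOrder A] [StarOrderedRing A] {a : A}

theorem mul_star_self_le_one_of_norm_le_one (ha : ‖a‖ ≤ 1) : a * star a ≤ 1 := by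
  rw [← CStarAlgebra.norm_le_one_iff_of_nonneg _ (mul_star_self_nonneg a),
    CStarRing.norm_self_mul_star]
  exact mul_le_one₀ ha (norm_nonneg a) ha

theorem mul_star_self_add_sqrt_mul_star_sqrt (ha : ‖a‖ ≤ 1) :
    a * star a + CFC.sqrt (1 - a * star a) * star (CFC.sqrt (1 - a * star a)) = 1 := by
  have hdefect : 0 ≤ 1 - a * star a := sub_nonneg.mpr (mul_star_self_le_one_of_norm_le_one ha)
  rw [(CFC.sqrt_nonneg (1 - a * star a)).isSelfAdjoint.star_eq, CFC.sqrt_mul_sqrt_self _ hdefect,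
    add_sub_cancel]

end Defect

theorem stmt_8 {H : Type*} [NormedAddCommGroup H] [InnerProductSpace ℂ H] [CompleteSpace H]
    (V : H →L[ℂ] H) (hcontr : ‖V‖ ≤ 1)
    (M : WithLp 2 (H × H) →L[ℂ] WithLp 2 (H × H))
    (hM : ∀ x y : H,
      M ((WithLp.equiv 2 (H × H)).symm (x, y)) =
        (WithLp.equiv 2 (H × H)).symm (V x + CFC.sqrt (1 - V * adjoint V) y, 0)) :
    IsPartialIsometry M := by
  let D : H →L[ℂ] H := CFC.sqrt (1 - V * adjoint V)
  have hrow : rowOperator V D ∘L adjoint (rowOperator V D) = ContinuousLinearMap.id ℂ H :=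
    (rowOperator_comp_adjoint V D).trans (mul_star_self_add_sqrt_mul_star_sqrt hcontr)
  have hM_apply (z : WithLp 2 (H × H)) : M z = WithLp.toLp 2 (rowOperator V D z, 0) :=
    hM z.fst z.snd
  refine IsPartialIsometry.of_norm_apply_eq hrow fun z => ?_
  rw [hM_apply, WithLp.norm_toLp_fst]
end

section
/- Let V be a partial isometry on a complex Hilbert space H and let n ≥ 1. Then V maps (ker V^n)^⊥ into (ker V^{n-1})^⊥ if and only if VV* maps ker(V^{n-1}) into ker(V^{n-1}). -/
open ContinuousLinearMap

/-!
The kernel of `V ^ n` is the preimage under `V` of the closed subspace `L = ker (V ^ (n - 1))`.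
By duality, `V` maps `(V⁻¹ L)ᗮ` into `Lᗮ` exactly when the adjoint `V†` maps `L` into the closed
subspace `V⁻¹ L`, which says that `V V†` maps `L` into `L`.
-/

open scoped InnerProductSpace

section Orthogonality

variable {𝕜 E F : Type*} [RCLike 𝕜]
  [NormedAddCommGroup E] [InnerProductSpace 𝕜 E] [CompleteSpace E]
  [NormedAddCommGroup F] [InnerProductSpace 𝕜 F] [CompleteSpace F]

lemma mapsTo_orthogonal_of_mapsTo_adjoint {T : E →L[𝕜] F} {K : Submodule 𝕜 E}
    {L : Submodule 𝕜 F} (h : Set.MapsTo (adjoint T) L K) : Set.MapsTo T Kᗮ Lᗮ := by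
  intro x hx y hy
  calc ⟪y, T x⟫_𝕜 = ⟪adjoint T y, x⟫_𝕜 := (adjoint_inner_left T x y).symm
    _ = 0 := Submodule.inner_right_of_mem_orthogonal (h hy) hx

lemma mapsTo_orthogonal_iff_mapsTo_adjoint {T : E →L[𝕜] F} {K : Submodule 𝕜 E}
    [K.HasOrthogonalProjection] {L : Submodule 𝕜 F} :
    Set.MapsTo T Kᗮ Lᗮ ↔ Set.MapsTo (adjoint T) L K := by
  refine ⟨fun h ↦ ?_, mapsTo_orthogonal_of_mapsTo_adjoint⟩
  have hbi : Set.MapsTo (adjoint T) Lᗮᗮ Kᗮᗮ :=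
    mapsTo_orthogonal_of_mapsTo_adjoint (by rwa [adjoint_adjoint])
  rw [K.orthogonal_orthogonal] at hbi
  exact hbi.mono_left L.le_orthogonal_orthogonal

theorem mapsTo_orthogonal_comap_iff {T : E →L[𝕜] F} {L : Submodule 𝕜 F}
    (hL : IsClosed (L : Set F)) :
    Set.MapsTo T (L.comap (T : E →ₗ[𝕜] F))ᗮ Lᗮ ↔ Set.MapsTo (T ∘L adjoint T) L L := by
  have : CompleteSpace (L.comap (T : E →ₗ[𝕜] F)) := (hL.preimage T.continuous).completeSpace_coe
  exact mapsTo_orthogonal_iff_mapsTo_adjoint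

end Orthogonality

theorem stmt_10_general {𝕜 H : Type*} [RCLike 𝕜] [NormedAddCommGroup H] [InnerProductSpace 𝕜 H]
    [CompleteSpace H] (V : H →L[𝕜] H) {n : ℕ} (hn : 1 ≤ n) :
    Set.MapsTo V (V ^ n).kerᗮ (V ^ (n - 1)).kerᗮ ↔
      Set.MapsTo (V * adjoint V) (V ^ (n - 1)).ker (V ^ (n - 1)).ker := by
  have hker : (V ^ n).ker = (V ^ (n - 1)).ker.comap (V : H →ₗ[𝕜] H) := by
    rw [← pow_sub_one_mul (Nat.one_le_iff_ne_zero.mp hn) V]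
    exact LinearMap.ker_comp _ _
  rw [hker]
  exact mapsTo_orthogonal_comap_iff (V ^ (n - 1)).isClosed_ker

theorem stmt_10 {H : Type*} [NormedAddCommGroup H] [InnerProductSpace ℂ H] [CompleteSpace H]
    (V : H →L[ℂ] H) (hV : IsPartialIsometry V) (n : ℕ) (hn : 1 ≤ n) :
    (∀ x ∈ (LinearMap.ker ((V ^ n : H →L[ℂ] H) : H →ₗ[ℂ] H))ᗮ, V x ∈ (LinearMap.ker ((V ^ (n - 1) : H →L[ℂ] H) : H →ₗ[ℂ] H))ᗮ) ↔
      (∀ x ∈ LinearMap.ker ((V ^ (n - 1) : H →L[ℂ] H) : H →ₗ[ℂ] H),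
        (V * adjoint V) x ∈ LinearMap.ker ((V ^ (n - 1) : H →L[ℂ] H) : H →ₗ[ℂ] H)) :=
  stmt_10_general V hn
end

section
/- Let V be a bounded linear operator on a complex Hilbert space H with closed range such that ker V ⊆ ⋂_{n ≥ 0} range(V^n), and let S be a bounded linear operator on H that is a generalized inverse of V, i.e., SVS = S and VSV = V. Then S maps ker(V^m) into ker(V^{m+1}) for every m ≥ 1. -/
open ContinuousLinearMap

section

variable {R M : Type*} [Ring R] [AddCommGroup M] [Module R M] {V : Module.End R M} {m : ℕ}

theorem ker_pow_le_range_of_ker_le_range_pow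
    (hV : LinearMap.ker V ≤ LinearMap.range (V ^ m)) :
    LinearMap.ker (V ^ m) ≤ LinearMap.range V := by
  induction m with
  | zero => simp [Module.End.one_eq_id]
  | succ k ih =>
    have range_succ : LinearMap.range (V ^ (k + 1)) = (LinearMap.range V).map (V ^ k) := by
      rw [pow_succ, Module.End.mul_eq_comp, LinearMap.range_comp]
    have ker_le_range : LinearMap.ker (V ^ k) ≤ LinearMap.range V :=
      ih (hV.trans (range_succ.trans_le LinearMap.map_le_range))
    calc LinearMap.ker (V ^ (k + 1))
        = (LinearMap.ker V).comap (V ^ k) := by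
          rw [pow_succ', Module.End.mul_eq_comp, LinearMap.ker_comp]
      _ ≤ ((LinearMap.range V).map (V ^ k)).comap (V ^ k) :=
          Submodule.comap_mono (hV.trans_eq range_succ)
      _ = LinearMap.range V ⊔ LinearMap.ker (V ^ k) := Submodule.comap_map_eq _ _
      _ = LinearMap.range V := sup_eq_left.mpr ker_le_range

theorem stmt_12_general {S : M → M} (hS : Set.RightInvOn S V (LinearMap.range V))
    (hV : LinearMap.ker V ≤ LinearMap.range (V ^ m)) :
    Set.MapsTo S (LinearMap.ker (V ^ m)) (LinearMap.ker (V ^ (m + 1))) := by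
  intro x hx
  have V_S_x : V (S x) = x := hS (ker_pow_le_range_of_ker_le_range_pow hV hx)
  rw [SetLike.mem_coe, LinearMap.mem_ker, pow_succ, Module.End.mul_apply, V_S_x]
  exact hx

end

theorem stmt_12 {H : Type*} [NormedAddCommGroup H] [InnerProductSpace ℂ H] [CompleteSpace H]
    (V : H →L[ℂ] H) (hclosed : IsClosed (LinearMap.range (V : H →ₗ[ℂ] H) : Set H))
    (hreg : LinearMap.ker (V : H →ₗ[ℂ] H) ≤ ⨅ n : ℕ, LinearMap.range ((V ^ n : H →L[ℂ] H) : H →ₗ[ℂ] H))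
    (S : H →L[ℂ] H) (hS₁ : S * V * S = S) (hS₂ : V * S * V = V) :
    ∀ m : ℕ, 1 ≤ m → ∀ x ∈ LinearMap.ker ((V ^ m : H →L[ℂ] H) : H →ₗ[ℂ] H), S x ∈ LinearMap.ker ((V ^ (m + 1) : H →L[ℂ] H) : H →ₗ[ℂ] H) := by
  simp only [toLinearMap_pow] at hreg ⊢
  have hS : Set.RightInvOn S V (LinearMap.range (V : H →ₗ[ℂ] H)) :=
    Set.forall_mem_range.mpr (DFunLike.congr_fun hS₂)
  exact fun m _ _ hx ↦ stmt_12_general hS (hreg.trans (iInf_le _ m)) hx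
end

section
/- Let V be a partial isometry on a complex Hilbert space H such that ker V ⊆ ⋂_{n ≥ 0} range(V^n). Then V is a power partial isometry, i.e., V^n is a partial isometry for every n ≥ 1. -/
open ContinuousLinearMap

/-!
A partial isometry `f` satisfies `⟪f x, f y⟫ = ⟪x, y⟫` as soon as one of the two vectors is
orthogonal to `ker f`. Hence, if `ker g ≤ range f`, then `f` maps `(ker (g ∘ f))ᗮ` into `(ker g)ᗮ`,
and `g ∘ f` is again a partial isometry. Apply this to `f ^ (n + 1) = f ^ n ∘ f`: the inclusion
`ker f ≤ range (f ^ n)` is turned into the required `ker (f ^ n) ≤ range f` by pure linear algebra.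
-/

theorem ker_pow_le_range_of_ker_le_range_pow_s13 {R M : Type*} [Ring R] [AddCommGroup M] [Module R M]
    (f : M →ₗ[R] M) (n : ℕ) (h : f.ker ≤ (f ^ n).range) : (f ^ n).ker ≤ f.range := by
  induction n with
  | zero => simp [Module.End.one_eq_id]
  | succ n ih =>
    have h_le : f.ker ≤ (f ^ n).range := h.trans (f.iterateRange.monotone n.le_succ)
    intro y hy
    have hy' : (f ^ n) y ∈ f.ker := by
      rwa [LinearMap.mem_ker, ← Module.End.mul_apply, ← pow_succ']
    obtain ⟨w, hw⟩ := h hy'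
    have h_sub : y - f w ∈ (f ^ n).ker := by
      rw [LinearMap.mem_ker, map_sub, ← hw, pow_succ, Module.End.mul_apply, sub_self]
    exact (Submodule.sub_mem_iff_left _ (LinearMap.mem_range_self f w)).1 (ih h_le h_sub)

section PartialIsometry

variable {𝕜 E F G : Type*} [RCLike 𝕜]
  [NormedAddCommGroup E] [InnerProductSpace 𝕜 E]
  [NormedAddCommGroup F] [InnerProductSpace 𝕜 F]
  [NormedAddCommGroup G] [InnerProductSpace 𝕜 G]

/-- Partial isometries between inner product spaces that need not be complete, as linear maps that
are isometric on the orthogonal complement of the kernel. The decomposition of the domain along the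
kernel, automatic for bounded operators on a Hilbert space, is not built in; it is supplied by
`Submodule.HasOrthogonalProjection`. -/
def IsLinearPartialIsometry (f : E →ₗ[𝕜] F) : Prop :=
  ∀ x ∈ f.kerᗮ, ‖f x‖ = ‖x‖

namespace IsLinearPartialIsometry

theorem inner_map_map_of_mem_ker_orthogonal {f : E →ₗ[𝕜] F} [f.ker.HasOrthogonalProjection]
    (hf : IsLinearPartialIsometry f) (x : E) {y : E} (hy : y ∈ f.kerᗮ) :
    inner 𝕜 (f x) (f y) = inner 𝕜 x y := by
  obtain ⟨a, ha, b, hb, rfl⟩ := f.ker.exists_add_mem_mem_orthogonal x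
  let restriction : f.kerᗮ →ₗᵢ[𝕜] F := ⟨f.domRestrict f.kerᗮ, fun u => hf u u.2⟩
  calc inner 𝕜 (f (a + b)) (f y)
      = inner 𝕜 (f b) (f y) := by rw [map_add, LinearMap.mem_ker.1 ha, zero_add]
    _ = inner 𝕜 b y := restriction.inner_map_map ⟨b, hb⟩ ⟨y, hy⟩
    _ = inner 𝕜 (a + b) y := by
      rw [inner_add_left, Submodule.inner_right_of_mem_orthogonal ha hy, zero_add]

theorem comp {g : F →ₗ[𝕜] G} {f : E →ₗ[𝕜] F} [f.ker.HasOrthogonalProjection]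
    (hg : IsLinearPartialIsometry g) (hf : IsLinearPartialIsometry f) (h : g.ker ≤ f.range) :
    IsLinearPartialIsometry (g ∘ₗ f) := by
  intro x hx
  have hx_ker : x ∈ f.kerᗮ := Submodule.orthogonal_le (LinearMap.ker_le_ker_comp f g) hx
  have hfx : f x ∈ g.kerᗮ := by
    rw [Submodule.mem_orthogonal]
    intro y hy
    obtain ⟨z, rfl⟩ := h hy
    rw [hf.inner_map_map_of_mem_ker_orthogonal z hx_ker]
    exact Submodule.inner_right_of_mem_orthogonal (K := (g ∘ₗ f).ker) hy hx
  rw [LinearMap.comp_apply, hg (f x) hfx, hf x hx_ker]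

end IsLinearPartialIsometry

theorem stmt_13_general (f : E →ₗ[𝕜] E) [f.ker.HasOrthogonalProjection]
    (hf : IsLinearPartialIsometry f) (n : ℕ) (h : f.ker ≤ (f ^ n).range) :
    IsLinearPartialIsometry (f ^ (n + 1)) := by
  induction n with
  | zero => simpa only [zero_add, pow_one] using hf
  | succ n ih =>
    have h_le : f.ker ≤ (f ^ n).range := h.trans (f.iterateRange.monotone n.le_succ)
    rw [pow_succ]
    exact (ih h_le).comp hf (ker_pow_le_range_of_ker_le_range_pow_s13 f (n + 1) h)

end PartialIsometry

theorem stmt_13 {H : Type*} [NormedAddCommGroup H] [InnerProductSpace ℂ H] [CompleteSpace H]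
    (V : H →L[ℂ] H) (hV : IsPartialIsometry V)
    (hreg : LinearMap.ker (V : H →ₗ[ℂ] H) ≤ ⨅ n : ℕ, LinearMap.range ((V ^ n : H →L[ℂ] H) : H →ₗ[ℂ] H)) :
    ∀ n : ℕ, 1 ≤ n → IsPartialIsometry (V ^ n) := by
  rintro (_ | n) hn
  · contradiction
  have h := stmt_13_general (V : H →ₗ[ℂ] H) hV n (toLinearMap_pow V n ▸ hreg.trans (iInf_le _ n))
  rwa [← toLinearMap_pow] at h
end

section
/- Let V be a partial isometry on a complex Hilbert space H such that ker V ⊆ ⋂_{n ≥ 0} range(V^n). Then H decomposes as the orthogonal direct sum H = M ⊕ R^∞, where R^∞ = ⋂_{n ≥ 0} range(V^n) and M is the closure of the linear span of ⋃_{n ≥ 0} V^n((range V)^⊥); that is, M and R^∞ are closed subspaces that are orthogonal complements of each other in H. -/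
open ContinuousLinearMap

/-!
If `V` is a partial isometry then `V†` is a generalized inverse of `V`, that is `V V† V = V`. Hence
`V†` is a right inverse of `V` on `range V`, so a `V†`-invariant subspace of `range V` lies in every
`range (V ^ n)`; and `V† V` differs from the identity by vectors of `ker V`, so for regular `V` the
generalized range is itself `V†`-invariant. It is therefore the largest `V†`-invariant subspace of
`range V`. Taking orthogonal complements exchanges `V†`-invariance with `V`-invariance, so its
orthogonal complement is the smallest closed `V`-invariant subspace containing `(range V)ᗮ`.
-/

open Module.End (invtSubmodule)
open scoped InnerProduct

section GeneralizedRange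

variable {R E : Type*} [Semiring R] [TopologicalSpace E] [AddCommMonoid E] [Module R E]

/-- The generalized range `R^∞ = ⋂ n, range (V ^ n)` of an operator; the term `n = 0` is `⊤`. -/
def generalizedRange (V : E →L[R] E) : Submodule R E :=
  ⨅ n : ℕ, (V ^ n).range

theorem mem_generalizedRange {V : E →L[R] E} {x : E} :
    x ∈ generalizedRange V ↔ ∀ n : ℕ, ∃ y, (V ^ n) y = x :=
  Submodule.mem_iInf _

theorem generalizedRange_le_range (V : E →L[R] E) : generalizedRange V ≤ V.range :=
  (iInf_le _ 1).trans_eq (by rw [pow_one])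

theorem le_generalizedRange_of_rightInvOn {V S : E →L[R] E} {W : Submodule R E}
    (hSW : W ∈ invtSubmodule S.toLinearMap) (hVS : Set.RightInvOn S V W) :
    W ≤ generalizedRange V := by
  have exists_preimage (n : ℕ) : ∀ x ∈ W, ∃ y, (V ^ n) y = x := by
    induction n with
    | zero => exact fun x _ ↦ ⟨x, rfl⟩
    | succ n ih =>
      intro x hx
      obtain ⟨y, hy⟩ := ih (S x) (hSW hx)
      exact ⟨y, by rw [pow_succ', mul_apply_eq_comp, hy, hVS hx]⟩
  exact fun x hx ↦ mem_generalizedRange.2 fun n ↦ exists_preimage n x hx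

end GeneralizedRange

section GeneralizedInverse

variable {R E F : Type*} [TopologicalSpace E] [TopologicalSpace F]

section Semiring

variable [Semiring R] [AddCommMonoid E] [Module R E] [AddCommMonoid F] [Module R F]

/-- `S` is a generalized (inner) inverse of `V`: `V S V = V`. The condition `S V S = S` is not
required. -/
def IsGeneralizedInverse (S : F →L[R] E) (V : E →L[R] F) : Prop :=
  V ∘L S ∘L V = V

namespace IsGeneralizedInverse

variable {S : F →L[R] E} {V : E →L[R] F}

theorem apply_apply_apply (hS : IsGeneralizedInverse S V) (x : E) : V (S (V x)) = V x :=
  DFunLike.congr_fun hS x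

theorem rightInvOn_range (hS : IsGeneralizedInverse S V) : Set.RightInvOn S V V.range := by
  rintro _ ⟨x, rfl⟩
  exact hS.apply_apply_apply x

theorem isClosed_range [T2Space F] (hS : IsGeneralizedInverse S V) :
    IsClosed (V.range : Set F) := by
  have range_eq : (V.range : Set F) = {x | V (S x) = x} :=
    Set.Subset.antisymm hS.rightInvOn_range fun x hx ↦ ⟨S x, hx⟩
  rw [range_eq]
  exact isClosed_eq (by fun_prop) continuous_id

end IsGeneralizedInverse

end Semiring

theorem IsGeneralizedInverse.generalizedRange_mem_invtSubmodule [Ring R] [AddCommGroup E]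
    [Module R E] {S V : E →L[R] E} (hS : IsGeneralizedInverse S V)
    (hreg : V.ker ≤ generalizedRange V) :
    generalizedRange V ∈ invtSubmodule S.toLinearMap := by
  intro x hx
  refine mem_generalizedRange.2 fun n ↦ ?_
  obtain ⟨y, rfl⟩ := mem_generalizedRange.1 hx (n + 1)
  have defect_mem_ker : S (V ((V ^ n) y)) - (V ^ n) y ∈ V.ker :=
    LinearMap.sub_mem_ker_iff.2 (hS.apply_apply_apply _)
  obtain ⟨w, hw⟩ := mem_generalizedRange.1 (hreg defect_mem_ker) n
  refine ⟨w + y, ?_⟩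
  calc (V ^ n) (w + y) = S (V ((V ^ n) y)) := by rw [map_add, hw, sub_add_cancel]
    _ = S ((V ^ (n + 1)) y) := by rw [pow_succ', mul_apply_eq_comp]

end GeneralizedInverse

section ClosedOrbitSpan

variable {R E : Type*} [Semiring R] [TopologicalSpace E] [AddCommMonoid E] [Module R E]
  [ContinuousAdd E] [ContinuousConstSMul R E]

/-- The closed linear span of the orbit of a set `s` under an operator `V`, i.e. the smallest
closed `V`-invariant subspace containing `s`. For `s = (range V)ᗮ` this is the subspace `M`. -/
def closedOrbitSpan (V : E →L[R] E) (s : Set E) : Submodule R E :=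
  (Submodule.span R (⋃ n : ℕ, (V ^ n) '' s)).topologicalClosure

theorem isClosed_closedOrbitSpan (V : E →L[R] E) (s : Set E) :
    IsClosed (closedOrbitSpan V s : Set E) :=
  Submodule.isClosed_topologicalClosure _

theorem pow_apply_mem_closedOrbitSpan (V : E →L[R] E) {s : Set E} {x : E} (hx : x ∈ s) (n : ℕ) :
    (V ^ n) x ∈ closedOrbitSpan V s :=
  Submodule.le_topologicalClosure _ <|
    Submodule.subset_span <| Set.mem_iUnion_of_mem n <| Set.mem_image_of_mem _ hx

theorem subset_closedOrbitSpan (V : E →L[R] E) (s : Set E) : s ⊆ closedOrbitSpan V s :=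
  fun _ hx ↦ pow_apply_mem_closedOrbitSpan V hx 0

theorem closedOrbitSpan_le_of_pow_apply_mem {V : E →L[R] E} {s : Set E} {W : Submodule R E}
    (hW : IsClosed (W : Set E)) (h : ∀ n : ℕ, ∀ x ∈ s, (V ^ n) x ∈ W) :
    closedOrbitSpan V s ≤ W :=
  Submodule.topologicalClosure_minimal _
    (Submodule.span_le.2 <| Set.iUnion_subset fun n ↦ Set.image_subset_iff.2 (h n)) hW

theorem closedOrbitSpan_mem_invtSubmodule (V : E →L[R] E) (s : Set E) :
    closedOrbitSpan V s ∈ invtSubmodule V.toLinearMap := by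
  refine closedOrbitSpan_le_of_pow_apply_mem
    ((isClosed_closedOrbitSpan V s).preimage V.continuous) fun n x hx ↦ ?_
  have hsucc := pow_apply_mem_closedOrbitSpan V hx (n + 1)
  rwa [pow_succ'] at hsucc

theorem closedOrbitSpan_le {V : E →L[R] E} {s : Set E} {W : Submodule R E}
    (hW : IsClosed (W : Set E)) (hVW : W ∈ invtSubmodule V.toLinearMap) (hs : s ⊆ W) :
    closedOrbitSpan V s ≤ W := by
  refine closedOrbitSpan_le_of_pow_apply_mem hW fun n x hx ↦ ?_
  rw [FunLike.coe_pow_eq_iterate]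
  exact Set.MapsTo.iterate hVW n (hs hx)

end ClosedOrbitSpan

section HilbertSpace

variable {𝕜 E F : Type*} [RCLike 𝕜] [NormedAddCommGroup E] [InnerProductSpace 𝕜 E]
  [CompleteSpace E] [NormedAddCommGroup F] [InnerProductSpace 𝕜 F] [CompleteSpace F]

theorem isGeneralizedInverse_adjoint_of_norm_map_orthogonal_ker {V : E →L[𝕜] F}
    (hV : ∀ x ∈ V.kerᗮ, ‖V x‖ = ‖x‖) : IsGeneralizedInverse (V†) V := by
  have : CompleteSpace V.ker := V.isClosed_ker.completeSpace_coe
  let P := V.kerᗮ.orthogonalProjectionOnto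
  let L : V.kerᗮ →L[𝕜] F := V ∘L V.kerᗮ.subtypeL
  have isometry_L : L† ∘L L = 1 :=
    (norm_map_iff_adjoint_comp_self L).1 fun x ↦ hV x x.2
  have factorization : L ∘L P = V := by
    ext x
    have ker_part : V (V.ker.starProjection x) = 0 := V.ker.starProjection_apply_mem x
    simp [L, P, Submodule.starProjection_orthogonal_val, ker_part]
  have projection_comp_adjoint : P ∘L P† = 1 := by
    ext x
    simp [P, Submodule.adjoint_orthogonalProjectionOnto]
  calc V ∘L V† ∘L V = L ∘L (P ∘L P†) ∘L (L† ∘L L) ∘L P := by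
        simp only [← factorization, adjoint_comp, comp_assoc]
    _ = V := by
        rw [projection_comp_adjoint, isometry_L, one_def, id_comp, id_comp, factorization]

theorem generalizedRange_eq_orthogonal_closedOrbitSpan {V : E →L[𝕜] E}
    (hV : IsGeneralizedInverse (V†) V) (hreg : V.ker ≤ generalizedRange V) :
    generalizedRange V = (closedOrbitSpan V (V.rangeᗮ : Set E))ᗮ := by
  apply le_antisymm
  · have hinv : (generalizedRange V)ᗮ ∈ invtSubmodule V.toLinearMap :=
      orthogonal_mem_invtSubmodule (hV.generalizedRange_mem_invtSubmodule hreg)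
    have hle : closedOrbitSpan V (V.rangeᗮ : Set E) ≤ (generalizedRange V)ᗮ :=
      closedOrbitSpan_le (Submodule.isClosed_orthogonal _) hinv
        (Submodule.orthogonal_le (generalizedRange_le_range V))
    exact (Submodule.le_orthogonal_orthogonal _).trans (Submodule.orthogonal_le hle)
  · have : CompleteSpace V.range := hV.isClosed_range.completeSpace_coe
    have hle : (closedOrbitSpan V (V.rangeᗮ : Set E))ᗮ ≤ V.range :=
      (Submodule.orthogonal_le (subset_closedOrbitSpan V _)).trans_eq
        V.range.orthogonal_orthogonal
    have hinv : (closedOrbitSpan V (V.rangeᗮ : Set E))ᗮ ∈ invtSubmodule (V†).toLinearMap :=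
      orthogonal_mem_invtSubmodule <|
        (adjoint_adjoint V).symm ▸ closedOrbitSpan_mem_invtSubmodule V _
    exact le_generalizedRange_of_rightInvOn hinv (hV.rightInvOn_range.mono hle)

theorem stmt_15_general {V : E →L[𝕜] E} (hV : ∀ x ∈ V.kerᗮ, ‖V x‖ = ‖x‖)
    (hreg : V.ker ≤ generalizedRange V) :
    closedOrbitSpan V (V.rangeᗮ : Set E) = (generalizedRange V)ᗮ ∧
      generalizedRange V = (closedOrbitSpan V (V.rangeᗮ : Set E))ᗮ := by
  have horth := generalizedRange_eq_orthogonal_closedOrbitSpan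
    (isGeneralizedInverse_adjoint_of_norm_map_orthogonal_ker hV) hreg
  have : CompleteSpace (closedOrbitSpan V (V.rangeᗮ : Set E)) :=
    (isClosed_closedOrbitSpan V _).completeSpace_coe
  exact ⟨by rw [horth, Submodule.orthogonal_orthogonal], horth⟩

end HilbertSpace

theorem stmt_15 {H : Type*} [NormedAddCommGroup H] [InnerProductSpace ℂ H] [CompleteSpace H]
    (V : H →L[ℂ] H) (hV : IsPartialIsometry V)
    (hreg : LinearMap.ker (V : H →ₗ[ℂ] H) ≤ ⨅ n : ℕ, LinearMap.range ((V ^ n : H →L[ℂ] H) : H →ₗ[ℂ] H))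
    (Rinf M : Submodule ℂ H)
    (hRinf : Rinf = ⨅ n : ℕ, LinearMap.range ((V ^ n : H →L[ℂ] H) : H →ₗ[ℂ] H))
    (hM : M = (Submodule.span ℂ
      (⋃ n : ℕ, (V ^ n) '' ((LinearMap.range (V : H →ₗ[ℂ] H))ᗮ : Set H))).topologicalClosure) :
    M = Rinfᗮ ∧ Rinf = Mᗮ := by
  subst hRinf hM
  exact stmt_15_general hV hreg
end

section
/- Fix n ≥ 1 and i ∈ {1,…,n}. Let H = ℓ²(ℕ, ℂ) with standard orthonormal basis (e_m)_{m ≥ 0}, let (w_m)_{m ≥ 0} be a bounded sequence of nonnegative real numbers, let B ⊆ ℕ, and set α_m = 0 if m ∈ B and α_m = 1 if m ∉ B. Let V be a bounded linear operator on H satisfying V e_m = w_m α_m e_{nm+i} for every m ≥ 0. If V is a partial isometry, then V is a power partial isometry, i.e., V^k is a partial isometry for every k ≥ 1. -/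
open ContinuousLinearMap

/-!
A bounded operator `V` is a partial isometry exactly when `V V† V = V`. If `V` sends each vector
`b m` of a Hilbert basis to `c m • b (g m)` with `g` injective, then `V V† V` sends it to
`c m • conj (c m) • c m • b (g m)`, so `V` is a partial isometry exactly when every weight is zero
or of modulus one. The powers of `V` have the same shape, and their weights are products of
weights of `V`.
-/

open scoped InnerProductSpace ComplexConjugate

section Criterion

theorem apply_starProjection_orthogonal_ker_s17 {𝕜 H F : Type*} [RCLike 𝕜]
    [NormedAddCommGroup H] [InnerProductSpace 𝕜 H] [CompleteSpace H]
    [NormedAddCommGroup F] [NormedSpace 𝕜 F] (V : H →L[𝕜] F) (x : H) :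
    V (V.kerᗮ.starProjection x) = V x := by
  have hx : x - V.kerᗮ.starProjection x ∈ V.ker := by
    simpa only [Submodule.orthogonal_orthogonal] using V.kerᗮ.sub_starProjection_mem_orthogonal x
  exact (sub_eq_zero.mp ((map_sub V _ _).symm.trans hx)).symm

variable {H : Type*} [NormedAddCommGroup H] [InnerProductSpace ℂ H] [CompleteSpace H]
  {V : H →L[ℂ] H}

theorem IsPartialIsometry.adjoint_mul_self_eq_starProjection (hV : IsPartialIsometry V) :
    adjoint V * V = V.kerᗮ.starProjection := by
  set P := V.kerᗮ.starProjection
  have norm_apply (x : H) : ‖V x‖ = ‖P x‖ := by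
    rw [← apply_starProjection_orthogonal_ker_s17, hV _ (V.kerᗮ.starProjection_apply_mem x)]
  have proj_proj (x : H) : P (P x) = P x :=
    Submodule.starProjection_eq_self_iff.mpr (V.kerᗮ.starProjection_apply_mem x)
  apply coe_injective
  rw [← ext_inner_map]
  intro x
  calc
    ⟪adjoint V (V x), x⟫_ℂ = ⟪V x, V x⟫_ℂ := adjoint_inner_left ..
    _ = ⟪P x, P x⟫_ℂ := by
      rw [inner_self_eq_norm_sq_to_K, norm_apply, ← inner_self_eq_norm_sq_to_K]
    _ = ⟪P x, x⟫_ℂ := by rw [← Submodule.inner_starProjection_left_eq_right, proj_proj]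

theorem isPartialIsometry_iff_mul_adjoint_mul_self :
    IsPartialIsometry V ↔ V * adjoint V * V = V := by
  constructor
  · intro hV
    ext x
    rw [mul_assoc, hV.adjoint_mul_self_eq_starProjection, mul_apply_eq_comp,
      apply_starProjection_orthogonal_ker_s17]
  · intro hV x hx
    have mem_ker : adjoint V (V x) - x ∈ V.ker := by
      simpa [sub_eq_zero] using DFunLike.congr_fun hV x
    have mem_orthogonal : adjoint V (V x) - x ∈ V.kerᗮ := by
      refine sub_mem ?_ hx
      rw [orthogonal_ker]
      exact Submodule.le_topologicalClosure _ ⟨V x, rfl⟩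
    have fixed : adjoint V (V x) = x :=
      sub_eq_zero.mp (Submodule.disjoint_def.mp V.ker.orthogonal_disjoint _ mem_ker mem_orthogonal)
    rw [apply_norm_eq_sqrt_inner_adjoint_left, comp_apply, fixed,
      norm_eq_sqrt_re_inner (𝕜 := ℂ)]

end Criterion

theorem default_hilbertBasis_apply {ι 𝕜 : Type*} [RCLike 𝕜] [DecidableEq ι] (m : ι) :
    (default : HilbertBasis ι 𝕜 (lp (fun _ : ι ↦ 𝕜) 2)) m = lp.single 2 m (1 : 𝕜) := by
  rw [← HilbertBasis.repr_symm_single]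
  rfl

section WeightedShift

variable {ι 𝕜 H : Type*} [RCLike 𝕜] [NormedAddCommGroup H] [InnerProductSpace 𝕜 H]

/-- `V` is the weighted shift `b m ↦ c m • b (g m)` along the map `g` of the index set of the
Hilbert basis `b`, with weights `c`. -/
def IsWeightedShift (b : HilbertBasis ι 𝕜 H) (g : ι → ι) (c : ι → 𝕜) (V : H →L[𝕜] H) : Prop :=
  ∀ m, V (b m) = c m • b (g m)

namespace IsWeightedShift

variable {b : HilbertBasis ι 𝕜 H} {g : ι → ι} {c : ι → 𝕜} {V W : H →L[𝕜] H}

theorem ext (hV : IsWeightedShift b g c V) (hW : IsWeightedShift b g c W) : V = W := by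
  have hb : Dense (Submodule.span 𝕜 (Set.range b) : Set H) :=
    Submodule.dense_iff_topologicalClosure_eq_top.mpr b.dense_span
  refine ContinuousLinearMap.ext_on hb ?_
  rintro _ ⟨m, rfl⟩
  rw [hV m, hW m]

theorem eq_iff {d : ι → 𝕜} (hV : IsWeightedShift b g c V) (hW : IsWeightedShift b g d W) :
    V = W ↔ c = d := by
  constructor
  · rintro rfl
    funext m
    exact smul_left_injective 𝕜 (b.orthonormal.ne_zero (g m)) ((hV m).symm.trans (hW m))
  · rintro rfl
    exact hV.ext hW

theorem pow (hV : IsWeightedShift b g c V) (k : ℕ) :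
    IsWeightedShift b g^[k] (fun m ↦ ∏ j ∈ Finset.range k, c (g^[j] m)) (V ^ k) := by
  induction k with
  | zero => simp [IsWeightedShift]
  | succ k ih =>
    intro m
    rw [pow_succ', mul_apply_eq_comp, ih m, map_smul, hV, smul_smul, ← Finset.prod_range_succ,
      Function.iterate_succ_apply']

theorem adjoint_apply [CompleteSpace H] (hV : IsWeightedShift b g c V) (hg : g.Injective)
    (m : ι) : adjoint V (b (g m)) = conj (c m) • b m := by
  classical
  apply b.repr.injective
  ext j
  have inner_basis (p q : ι) : ⟪b p, b q⟫_𝕜 = if p = q then 1 else 0 :=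
    orthonormal_iff_ite.mp b.orthonormal p q
  rw [map_smul, lp.coeFn_smul, Pi.smul_apply, b.repr_apply_apply, b.repr_apply_apply,
    adjoint_inner_right, hV, inner_smul_left, inner_basis, inner_basis]
  by_cases hj : j = m
  · simp [hj]
  · simp [hj, hg.ne hj]

theorem mul_adjoint_mul_self [CompleteSpace H] (hV : IsWeightedShift b g c V)
    (hg : g.Injective) :
    IsWeightedShift b g (fun m ↦ c m * conj (c m) * c m) (V * adjoint V * V) := by
  intro m
  simp only [mul_apply_eq_comp, hV m, map_smul, hV.adjoint_apply hg, smul_smul]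
  congr 1
  ring

end IsWeightedShift

end WeightedShift

section PartialIsometry

variable {ι H : Type*} [NormedAddCommGroup H] [InnerProductSpace ℂ H] [CompleteSpace H]
  {b : HilbertBasis ι ℂ H} {g : ι → ι} {c : ι → ℂ} {V : H →L[ℂ] H}

theorem IsWeightedShift.isPartialIsometry_iff (hV : IsWeightedShift b g c V)
    (hg : g.Injective) : IsPartialIsometry V ↔ ∀ m, c m = 0 ∨ ‖c m‖ = 1 := by
  rw [isPartialIsometry_iff_mul_adjoint_mul_self, (hV.mul_adjoint_mul_self hg).eq_iff hV,
    funext_iff]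
  refine forall_congr' fun m ↦ ?_
  rw [mul_left_eq_self₀, Complex.mul_conj', or_comm]
  norm_cast
  rw [pow_eq_one_iff_of_nonneg (norm_nonneg _) two_ne_zero]

theorem stmt_17_general (hV : IsWeightedShift b g c V) (hg : g.Injective)
    (hpi : IsPartialIsometry V) (k : ℕ) : IsPartialIsometry (V ^ k) := by
  rw [(hV.pow k).isPartialIsometry_iff (hg.iterate k)]
  rw [hV.isPartialIsometry_iff hg] at hpi
  intro m
  rw [Finset.prod_eq_zero_iff, norm_prod, or_iff_not_imp_left]
  intro hne
  push Not at hne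
  exact Finset.prod_eq_one fun j hj ↦ (hpi _).resolve_left (hne j hj)

end PartialIsometry

theorem stmt_17 (n : ℕ) (hn : 1 ≤ n) (i : ℕ) (hi : i ∈ Finset.Icc 1 n)
    (w : ℕ → ℝ) (hw_nonneg : ∀ m, 0 ≤ w m) (hw_bdd : ∃ C : ℝ, ∀ m, w m ≤ C)
    (B : Set ℕ) (α : ℕ → ℝ)
    (hα₀ : ∀ m ∈ B, α m = 0) (hα₁ : ∀ m ∉ B, α m = 1)
    (V : lp (fun _ : ℕ => ℂ) 2 →L[ℂ] lp (fun _ : ℕ => ℂ) 2)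
    (hV : ∀ m : ℕ, V (lp.single 2 m (1 : ℂ)) =
      ((w m * α m : ℝ) : ℂ) • lp.single 2 (n * m + i) (1 : ℂ))
    (hpi : IsPartialIsometry V) :
    ∀ k : ℕ, 1 ≤ k → IsPartialIsometry (V ^ k) := by
  simp only [← default_hilbertBasis_apply] at hV
  exact fun k _ ↦ stmt_17_general hV
    (fun _ _ h ↦ Nat.eq_of_mul_eq_mul_left hn (Nat.add_right_cancel h)) hpi k
end
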